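/- Let M = {F = 0} be a germ of an irreducible singular real-analytic Levi-flat hypersurface at 0 ∈ ℂ² with F(z) = Re(Q(z)) + H(z, z̄), where Q is a quasihomogeneous polynomial of type (a,b) with gcd(a,b) = 1 and quasihomogeneous degree d, having an isolated singularity at 0 ∈ ℂ², and H is real-analytic with all Taylor monomials of weighted degree strictly greater than d and H(z, z̄) = conj(H(z̄, z)). Then Sing(L_ℂ) has codimension two in M*_ℂ; that is, the set of points p ∈ M*_ℂ at which α(p) vanishes on T_p M_ℂ is a complex-analytic subset of complex dimension one (Hausdorff dimension two) of the three-dimensional complex manifold M*_ℂ. -/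

import Mathlib

open Filter Topology

/-- Wirtinger derivative ∂/∂z_j of a (complex-valued) function at `p`:
`(1/2)(∂F/∂x_j − i ∂F/∂y_j)`. -/
noncomputable def wirtZ {n : ℕ} (F : (Fin n → ℂ) → ℂ) (j : Fin n) (p : Fin n → ℂ) : ℂ :=
  (fderiv ℝ F p (Pi.single j 1) - Complex.I * fderiv ℝ F p (Pi.single j Complex.I)) / 2

/-- Wirtinger derivative ∂/∂z̄_j of a (complex-valued) function at `p`:
`(1/2)(∂F/∂x_j + i ∂F/∂y_j)`. -/
noncomputable def wirtZbar {n : ℕ} (F : (Fin n → ℂ) → ℂ) (j : Fin n) (p : Fin n → ℂ) : ℂ :=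
  (fderiv ℝ F p (Pi.single j 1) + Complex.I * fderiv ℝ F p (Pi.single j Complex.I)) / 2

/-- The germ `M = {F = 0}` at `0` is Levi-flat: for every point `p` of `M* = M \ Sing(M)`
near `0` and every `v` with `Σ_j F_{z_j}(p) v_j = 0` one has
`Σ_{i,j} F_{z_i z̄_j}(p) v_i conj(v_j) = 0`. -/
def LeviFlatGerm {n : ℕ} (F : (Fin n → ℂ) → ℝ) : Prop :=
  ∀ᶠ p in 𝓝 (0 : Fin n → ℂ), F p = 0 → fderiv ℝ F p ≠ 0 →
    ∀ v : Fin n → ℂ,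
      (∑ j, wirtZ (fun z => ((F z : ℝ) : ℂ)) j p * v j) = 0 →
      (∑ i, ∑ j, wirtZbar (wirtZ (fun z => ((F z : ℝ) : ℂ)) i) j p * v i * (starRingEnd ℂ) (v j)) = 0

/-- `F` is irreducible in the ring of germs at `0` of real-valued real-analytic functions:
in any factorization `F = g·h` one of the factors is a unit (i.e. does not vanish at `0`). -/
def IrreducibleRGerm {n : ℕ} (F : (Fin n → ℂ) → ℝ) : Prop :=
  ∀ g h : (Fin n → ℂ) → ℝ, AnalyticAt ℝ g 0 → AnalyticAt ℝ h 0 →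
    (∀ᶠ z in 𝓝 (0 : Fin n → ℂ), F z = g z * h z) → g 0 ≠ 0 ∨ h 0 ≠ 0

/-- `φ` is a germ of biholomorphism `(ℂⁿ,0) → (ℂⁿ,0)` with local inverse `ι`. -/
def IsGermBiholo {n : ℕ} (φ ι : (Fin n → ℂ) → (Fin n → ℂ)) : Prop :=
  AnalyticAt ℂ φ 0 ∧ AnalyticAt ℂ ι 0 ∧ φ 0 = 0 ∧ ι 0 = 0 ∧
  (∀ᶠ z in 𝓝 (0 : Fin n → ℂ), ι (φ z) = z) ∧ (∀ᶠ z in 𝓝 (0 : Fin n → ℂ), φ (ι z) = z)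

/-- `φ` is volume-preserving (isochore): the determinant of its complex Jacobian is
identically `1` near `0`. -/
def IsVolumePreserving {n : ℕ} (φ : (Fin n → ℂ) → (Fin n → ℂ)) : Prop :=
  ∀ᶠ z in 𝓝 (0 : Fin n → ℂ), LinearMap.det ((fderiv ℂ φ z).toLinearMap) = 1

/-- `ψ` is a germ of automorphism of `(ℂ,0)`. -/
def IsGermAuto (ψ : ℂ → ℂ) : Prop :=
  AnalyticAt ℂ ψ 0 ∧ ψ 0 = 0 ∧ deriv ψ 0 ≠ 0

/-- `FC` is the complexification of `F`: the (unique) germ of holomorphic function at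
`0 ∈ ℂⁿ × ℂⁿ` such that `FC (z, z̄) = F z` near `0`. -/
def IsComplexification {n : ℕ} (F : (Fin n → ℂ) → ℝ)
    (FC : ((Fin n → ℂ) × (Fin n → ℂ)) → ℂ) : Prop :=
  AnalyticAt ℂ FC 0 ∧ ∀ᶠ z in 𝓝 (0 : Fin n → ℂ), FC (z, star z) = ((F z : ℝ) : ℂ)

/-- The singular set `Sing(M_ℂ) = {F_ℂ = 0} ∩ {dF_ℂ = 0}` of the complexification. -/
def singMC {n : ℕ} (FC : ((Fin n → ℂ) × (Fin n → ℂ)) → ℂ) :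
    Set ((Fin n → ℂ) × (Fin n → ℂ)) :=
  {p | FC p = 0 ∧ fderiv ℂ FC p = 0}

/-- The singular set of the complexified Levi foliation `L_ℂ`: points of
`M*_ℂ` at which `α = Σ_j (∂F_ℂ/∂z_j) dz_j` vanishes on `T_p M_ℂ = ker dF_ℂ(p)`.
Note that `α(p)(v) = dF_ℂ(p)(v₁, 0)`. -/
def singLC {n : ℕ} (FC : ((Fin n → ℂ) × (Fin n → ℂ)) → ℂ) :
    Set ((Fin n → ℂ) × (Fin n → ℂ)) :=
  {p | FC p = 0 ∧ fderiv ℂ FC p ≠ 0 ∧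
    ∀ v : (Fin n → ℂ) × (Fin n → ℂ), fderiv ℂ FC p v = 0 → fderiv ℂ FC p (v.1, 0) = 0}

/-!
Let `P(z, w) = (Q(z) + Q̄(w)) / 2`. The complexification `f` of `F` has leading part `P` for the
weighted dilations of `ℂ² × ℂ²`, and leading parts differentiate. Splitting the linear form
`df = ∂_z f + ∂_w f` shows that, where `df ≠ 0`, the form `∂_z f` vanishes on `ker df` exactly when
`∂_z f = 0` or `∂_w f = 0`. Since `0` is the only critical point of `P`, hence near `0` of `f`, the
germ of `Sing(L_ℂ)` at `0` is the union of the analytic sets `{f = 0, ∂_z f = 0}` and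
`{f = 0, ∂_w f = 0}`, minus the origin. Each is cut out by three equations in dimension four and
passes through `0`, so it has dimension at least one there. Adding a fourth equation
`w₁ ^ a = v w₀ ^ b` (respectively `z₁ ^ a = v z₀ ^ b`) with generic `v` leaves only the origin,
because this holds for the leading parts; so the dimension is at most one.

The passage from `F` to `f` uses that `{(z, z̄)}` is a set of uniqueness for holomorphic functions.
For the upper bound on the Hausdorff dimension, an analytic set is a countable union of injectively
parametrized patches, a compact one is countable, and a patch on which the fourth function has
countable fibres has complex dimension at most one. The lower bound holds because a holomorphic map
between spaces of equal dimension is open at an isolated zero; this is proved by avoiding, along a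
segment, the small set of critical values.
-/

section LocalDimension

open scoped ENNReal

variable {X : Type*} [MetricSpace X] {S T : Set X} {x : X} {δ : ℝ≥0∞}

/-- The germ of `S` at `x` has Hausdorff dimension `δ`: the part of `S` in every sufficiently small
neighbourhood of `x` has dimension `δ`. -/
def HasLocalDimH (S : Set X) (x : X) (δ : ℝ≥0∞) : Prop :=
  ∃ V ∈ 𝓝 x, ∀ U ∈ 𝓝 x, U ⊆ V → dimH (S ∩ U) = δ

namespace HasLocalDimH

lemma of_le_of_le (hle : ∃ V ∈ 𝓝 x, dimH (S ∩ V) ≤ δ) (hge : ∀ U ∈ 𝓝 x, δ ≤ dimH (S ∩ U)) :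
    HasLocalDimH S x δ := by
  obtain ⟨V, hV, hVδ⟩ := hle
  exact ⟨V, hV, fun U hU hUV =>
    ((dimH_mono (Set.inter_subset_inter_right S hUV)).trans hVδ).antisymm (hge U hU)⟩

lemma exists_dimH_eq (h : HasLocalDimH S x δ) : ∃ U ∈ 𝓝 x, dimH (S ∩ U) = δ := by
  obtain ⟨V, hV, hdim⟩ := h
  exact ⟨V, hV, hdim V hV subset_rfl⟩

lemma congr (h : HasLocalDimH S x δ) (hST : ∀ᶠ y in 𝓝 x, y ∈ S ↔ y ∈ T) :
    HasLocalDimH T x δ := by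
  obtain ⟨V, hV, hdim⟩ := h
  refine ⟨V ∩ {y | y ∈ S ↔ y ∈ T}, inter_mem hV hST, fun U hU hUV => ?_⟩
  rw [← hdim U hU fun y hy => (hUV hy).1]
  congr 1
  ext y
  exact and_congr_left fun hy => (hUV hy).2.symm

lemma union (hS : HasLocalDimH S x δ) (hT : HasLocalDimH T x δ) : HasLocalDimH (S ∪ T) x δ := by
  obtain ⟨V, hV, hVdim⟩ := hS
  obtain ⟨W, hW, hWdim⟩ := hT
  refine ⟨V ∩ W, inter_mem hV hW, fun U hU hUVW => ?_⟩
  rw [Set.union_inter_distrib_right, dimH_union,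
    hVdim U hU fun y hy => (hUVW hy).1, hWdim U hU fun y hy => (hUVW hy).2, max_self]

lemma diff_singleton (h : HasLocalDimH S x δ) (y : X) : HasLocalDimH (S \ {y}) x δ := by
  obtain ⟨V, hV, hdim⟩ := h
  refine ⟨V, hV, fun U hU hUV => le_antisymm ?_ ?_⟩
  · exact hdim U hU hUV ▸ dimH_mono (Set.inter_subset_inter_left U Set.sdiff_subset)
  · calc δ = dimH (S ∩ U) := (hdim U hU hUV).symm
      _ ≤ dimH (S \ {y} ∩ U ∪ {y}) := dimH_mono fun z hz => by
        by_cases hzy : z = y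
        · exact Or.inr hzy
        · exact Or.inl ⟨⟨hz.1, hzy⟩, hz.2⟩
      _ = dimH (S \ {y} ∩ U) := by rw [dimH_union, dimH_singleton, max_eq_left zero_le]

end HasLocalDimH

end LocalDimension

/-! ### Patches and stratification of analytic sets -/

section Patches

open Metric Set

variable {E F : Type*} [NormedAddCommGroup E] [NormedSpace ℂ E]
  [NormedAddCommGroup F] [NormedSpace ℂ F]

/-- A `k`-dimensional patch: the image of a ball of `ℂᵏ` under an injective holomorphic map. -/
def IsPatch (k : ℕ) (P : Set E) : Prop :=
  ∃ (φ : (Fin k → ℂ) → E) (c : Fin k → ℂ) (r : ℝ), 0 < r ∧ AnalyticOnNhd ℂ φ (ball c r) ∧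
    InjOn φ (ball c r) ∧ φ '' ball c r = P

lemma isPatch_ball {k : ℕ} (c : Fin k → ℂ) {r : ℝ} (hr : 0 < r) : IsPatch k (ball c r) :=
  ⟨id, c, r, hr, analyticOnNhd_id, injOn_id _, image_id _⟩

lemma IsPatch.image {k : ℕ} {P : Set E} (hP : IsPatch k P) {φ : E → F}
    (hφ : AnalyticOnNhd ℂ φ P) (hinj : InjOn φ P) : IsPatch k (φ '' P) := by
  obtain ⟨ψ, c, r, hr, hψ, hψinj, rfl⟩ := hP
  have hmaps : MapsTo ψ (ball c r) (ψ '' ball c r) := mapsTo_image ψ _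
  exact ⟨φ ∘ ψ, c, r, hr, fun s hs => (hφ _ (hmaps hs)).comp (hψ s hs), hinj.comp hψinj hmaps,
    image_comp φ ψ _⟩

lemma exists_analyticAt_chart_of_fderiv_ne_zero [CompleteSpace E] {g : E → ℂ} {y : E}
    (hg : AnalyticAt ℂ g y) (hdg : fderiv ℂ g y ≠ 0) :
    ∃ (π : E → (fderiv ℂ g y).ker) (ψ : (fderiv ℂ g y).ker → E), ContinuousAt π y ∧ ψ (π y) = y ∧
      AnalyticAt ℂ ψ (π y) ∧ (∀ᶠ k in 𝓝 (π y), g (ψ k) = g y ∧ π (ψ k) = k) ∧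
      ∀ᶠ x in 𝓝 y, g x = g y → ψ (π x) = x := by
  have hsurj : (fderiv ℂ g y).range = ⊤ :=
    LinearMap.range_eq_top.2 (LinearMap.surjective (ContinuousLinearMap.coe_injective.ne hdg))
  let D := HasStrictFDerivAt.implicitFunctionDataOfComplemented g (fderiv ℂ g y)
    hg.hasStrictFDerivAt hsurj (fderiv ℂ g y).ker_closedComplemented_of_finiteDimensional_range
  have hslice : AnalyticAt ℂ (fun k => (g y, k)) (D.rightFun y) :=
    analyticAt_const.prod analyticAt_id
  have hright : AnalyticAt ℂ D.rightFun y :=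
    ContinuousLinearMap.analyticAt _ _ |>.comp (analyticAt_id.sub analyticAt_const)
  have hψ : AnalyticAt ℂ D.implicitFunction.uncurry (g y, D.rightFun y) :=
    (D.contDiffAt_implicitFunction (n := ⊤) hg.contDiffAt hright.contDiffAt (by simp)).analyticAt
  refine ⟨D.rightFun, D.implicitFunction (g y), hright.continuousAt,
    D.implicitFunction_apply_image.self_of_nhds, hψ.comp hslice,
    hslice.continuousAt.eventually (D.leftFun_implicitFunction.and D.rightFun_implicitFunction), ?_⟩
  filter_upwards [D.implicitFunction_apply_image] with x hx hgx
  exact hgx ▸ hx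

lemma exists_isPatch_of_fderiv_ne_zero [FiniteDimensional ℂ E] {n : ℕ}
    (hE : Module.finrank ℂ E = n + 1) {g : E → ℂ} {y : E} (hg : AnalyticAt ℂ g y)
    (hdg : fderiv ℂ g y ≠ 0) {V : Set E} (hV : V ∈ 𝓝 y) :
    ∃ P ⊆ V, IsPatch n P ∧ (∀ x ∈ P, g x = g y) ∧ ∃ W ∈ 𝓝 y, W ∩ {x | g x = g y} ⊆ P := by
  have := FiniteDimensional.complete ℂ E
  obtain ⟨π, ψ, hπ, hψy, hψ, hleft, hright⟩ := exists_analyticAt_chart_of_fderiv_ne_zero hg hdg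
  let L : (fderiv ℂ g y).ker ≃L[ℂ] (Fin n → ℂ) := ContinuousLinearEquiv.ofFinrankEq <| by
    have := Module.Dual.finrank_ker_add_one_of_ne_zero
      (ContinuousLinearMap.coe_injective.ne hdg : (fderiv ℂ g y).toLinearMap ≠ 0)
    rw [Module.finrank_fin_fun]
    exact Nat.succ_injective (this.trans hE)
  have hgood : ∀ᶠ s in 𝓝 (L (π y)), AnalyticAt ℂ ψ (L.symm s) ∧
      (g (ψ (L.symm s)) = g y ∧ π (ψ (L.symm s)) = L.symm s) ∧ ψ (L.symm s) ∈ V := by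
    have hL : Tendsto L.symm (𝓝 (L (π y))) (𝓝 (π y)) := by
      simpa using L.symm.continuous.tendsto (L (π y))
    exact hL.eventually (hψ.eventually_analyticAt.and
      (hleft.and (hψ.continuousAt.eventually (hψy.symm ▸ hV))))
  obtain ⟨r, hr, hball⟩ := Metric.eventually_nhds_iff_ball.1 hgood
  refine ⟨(ψ ∘ L.symm) '' ball (L (π y)) r, image_subset_iff.2 fun s hs => (hball s hs).2.2,
    ⟨ψ ∘ L.symm, _, r, hr,
      fun s hs => (hball s hs).1.comp (L.symm.toContinuousLinearMap.analyticAt s),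
      fun s hs s' hs' hss => L.symm.injective ?_, rfl⟩,
    forall_mem_image.2 fun s hs => (hball s hs).2.1.1, _,
    inter_mem hright ((L.continuous.continuousAt.comp hπ).preimage_mem_nhds (ball_mem_nhds _ hr)),
    ?_⟩
  · rw [← (hball s hs).2.1.2, ← (hball s' hs').2.1.2]
    exact congrArg π hss
  · rintro x ⟨⟨hx, hxr⟩, hgx⟩
    exact ⟨L (π x), hxr, by simpa using hx hgx⟩

lemma exists_countable_subset_sUnion_of_locally {X : Type*} [TopologicalSpace X]
    [SecondCountableTopology X] {p : Set X → Prop} {S : Set X}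
    (h : ∀ x ∈ S, ∃ P, p P ∧ ∃ W ∈ 𝓝 x, W ∩ S ⊆ P) :
    ∃ Ps : Set (Set X), Ps.Countable ∧ (∀ P ∈ Ps, p P) ∧ S ⊆ ⋃₀ Ps := by
  choose! P hP W hW hWP using h
  obtain ⟨D, hDS, hDc, hD⟩ := TopologicalSpace.countable_cover_nhdsWithin
    fun x hx => mem_nhdsWithin_of_mem_nhds (hW x hx)
  refine ⟨P '' D, hDc.image P, forall_mem_image.2 fun x hx => hP x (hDS hx), fun x hx => ?_⟩
  obtain ⟨y, hy, hxy⟩ := mem_iUnion₂.1 (hD hx)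
  exact ⟨P y, mem_image_of_mem P hy, hWP y (hDS hy) ⟨hxy, hx⟩⟩

lemma exists_iteratedFDeriv_ne_zero [CompleteSpace F] {f : E → F} {y : E} (hf : AnalyticAt ℂ f y)
    (hne : ¬ ∀ᶠ x in 𝓝 y, f x = 0) : ∃ m, iteratedFDeriv ℂ m f y ≠ 0 := by
  contrapose! hne
  obtain ⟨p, r, hp⟩ := hf
  have hmem : ∀ᶠ x in 𝓝 y, x - y ∈ Metric.eball (0 : E) r :=
    (by fun_prop : Continuous fun x : E => x - y).continuousAt.preimage_mem_nhds
      (by simpa using Metric.eball_mem_nhds (0 : E) hp.r_pos)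
  filter_upwards [hmem] with x hx
  have hsum := hp.hasSum_iteratedFDeriv hx
  simp only [hne, zero_apply, smul_zero, add_sub_cancel] at hsum
  exact hsum.unique hasSum_zero

lemma exists_iteratedFDeriv_eq_zero_and_fderiv_ne_zero [CompleteSpace F] {f : E → F} {y : E}
    (hf : AnalyticAt ℂ f y) (hfy : f y = 0) (hne : ¬ ∀ᶠ x in 𝓝 y, f x = 0) :
    ∃ m, iteratedFDeriv ℂ m f y = 0 ∧ fderiv ℂ (iteratedFDeriv ℂ m f) y ≠ 0 := by
  classical
  have hex := exists_iteratedFDeriv_ne_zero hf hne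
  obtain ⟨m, hm⟩ : ∃ m, Nat.find hex = m + 1 := Nat.exists_eq_succ_of_ne_zero fun h0 =>
    Nat.find_spec hex (by rw [h0]; ext; simp [hfy])
  refine ⟨m, not_not.1 (Nat.find_min hex (by omega)), fun hzero => Nat.find_spec hex ?_⟩
  rw [hm, iteratedFDeriv_succ_eq_comp_left, Function.comp_apply, hzero]
  exact LinearIsometryEquiv.map_zero _

lemma exists_isPatch_of_iteratedFDeriv [FiniteDimensional ℂ E] {n : ℕ}
    (hE : Module.finrank ℂ E = n + 1) {f : E → ℂ} {y : E} (hf : AnalyticAt ℂ f y) {m : ℕ}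
    (hfy : iteratedFDeriv ℂ m f y = 0) (hdf : fderiv ℂ (iteratedFDeriv ℂ m f) y ≠ 0)
    {V : Set E} (hV : V ∈ 𝓝 y) :
    ∃ P ⊆ V, IsPatch n P ∧ ∃ W ∈ 𝓝 y, W ∩ {x | iteratedFDeriv ℂ m f x = 0} ⊆ P := by
  have han : AnalyticAt ℂ (iteratedFDeriv ℂ m f) y :=
    (by simpa [AnalyticOnNhd] using hf : AnalyticOnNhd ℂ f {y}).iteratedFDeriv m y rfl
  obtain ⟨v, u, hvu⟩ : ∃ v u, fderiv ℂ (iteratedFDeriv ℂ m f) y v u ≠ 0 := by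
    contrapose! hdf
    ext v u
    exact hdf v u
  let ev : (E [×m]→L[ℂ] ℂ) →L[ℂ] ℂ := ContinuousMultilinearMap.apply ℂ (fun _ : Fin m => E) ℂ u
  have hderiv : fderiv ℂ (ev ∘ iteratedFDeriv ℂ m f) y v ≠ 0 := by
    rwa [(ev.hasFDerivAt.comp y han.differentiableAt.hasFDerivAt).fderiv]
  obtain ⟨P, hPV, hP, -, W, hW, hWP⟩ := exists_isPatch_of_fderiv_ne_zero hE
    ((ev.analyticAt _).comp han) (fun h => hderiv (by rw [h]; rfl)) hV
  exact ⟨P, hPV, hP, W, hW, fun x hx => hWP ⟨hx.1, congrArg ev (hx.2.trans hfy.symm)⟩⟩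

lemma exists_countable_isPatch_cover_zeros [FiniteDimensional ℂ E] {n : ℕ}
    (hE : Module.finrank ℂ E = n + 1) {V : Set E} (hV : IsOpen V) {f : E → ℂ}
    (hf : AnalyticOnNhd ℂ f V) :
    ∃ Ps : Set (Set E), Ps.Countable ∧ (∀ P ∈ Ps, IsPatch n P ∧ P ⊆ V) ∧
      {x ∈ V | f x = 0 ∧ ¬ ∀ᶠ y in 𝓝 x, f y = 0} ⊆ ⋃₀ Ps := by
  have := FiniteDimensional.proper ℂ E
  have hlocal (m : ℕ) : ∀ x ∈ {x ∈ V | iteratedFDeriv ℂ m f x = 0 ∧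
      fderiv ℂ (iteratedFDeriv ℂ m f) x ≠ 0}, ∃ P, (IsPatch n P ∧ P ⊆ V) ∧ ∃ W ∈ 𝓝 x,
      W ∩ {x ∈ V | iteratedFDeriv ℂ m f x = 0 ∧ fderiv ℂ (iteratedFDeriv ℂ m f) x ≠ 0} ⊆ P := by
    rintro x ⟨hx, hfx, hdfx⟩
    obtain ⟨P, hPV, hP, W, hW, hWP⟩ :=
      exists_isPatch_of_iteratedFDeriv hE (hf x hx) hfx hdfx (hV.mem_nhds hx)
    exact ⟨P, ⟨hP, hPV⟩, W, hW, fun y hy => hWP ⟨hy.1, hy.2.2.1⟩⟩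
  choose Ps hc hP hcov using fun m => exists_countable_subset_sUnion_of_locally (hlocal m)
  refine ⟨⋃ m, Ps m, countable_iUnion hc, fun P hPm => ?_, fun x hx => ?_⟩
  · obtain ⟨m, hm⟩ := mem_iUnion.1 hPm
    exact hP m P hm
  · obtain ⟨m, hm⟩ :=
      exists_iteratedFDeriv_eq_zero_and_fderiv_ne_zero (hf x hx.1) hx.2.1 hx.2.2
    exact sUnion_subset_sUnion (subset_iUnion Ps m) (hcov m ⟨hx.1, hm⟩)

/-- A set stratified by patches: a countable union of patches of arbitrary dimensions. -/
def IsStratified (S : Set E) : Prop :=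
  ∃ Ps : Set (Set E), Ps.Countable ∧ (∀ P ∈ Ps, ∃ k, IsPatch k P) ∧ ⋃₀ Ps = S

lemma IsStratified.image {S : Set E} (hS : IsStratified S) {φ : E → F} (hφ : AnalyticOnNhd ℂ φ S)
    (hinj : InjOn φ S) : IsStratified (φ '' S) := by
  obtain ⟨Ps, hc, hP, rfl⟩ := hS
  refine ⟨Set.image φ '' Ps, hc.image _, ?_, image_sUnion.symm⟩
  rintro _ ⟨P, hPm, rfl⟩
  obtain ⟨k, hk⟩ := hP P hPm
  have hsub : P ⊆ ⋃₀ Ps := subset_sUnion_of_mem hPm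
  exact ⟨k, hk.image (hφ.mono hsub) (hinj.mono hsub)⟩

lemma IsStratified.union {S T : Set E} (hS : IsStratified S) (hT : IsStratified T) :
    IsStratified (S ∪ T) := by
  obtain ⟨Ps, hPc, hP, rfl⟩ := hS
  obtain ⟨Qs, hQc, hQ, rfl⟩ := hT
  exact ⟨Ps ∪ Qs, hPc.union hQc, fun P => Or.rec (hP P) (hQ P), sUnion_union Ps Qs⟩

lemma IsStratified.biUnion {ι : Type*} {I : Set ι} (hI : I.Countable) {S : ι → Set E}
    (hS : ∀ i ∈ I, IsStratified (S i)) : IsStratified (⋃ i ∈ I, S i) := by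
  choose! Ps hc hP hU using hS
  refine ⟨⋃ i ∈ I, Ps i, hI.biUnion hc, fun P hPm => ?_, ?_⟩
  · obtain ⟨i, hi, hPi⟩ := mem_iUnion₂.1 hPm
    exact hP i hi P hPi
  · simp only [sUnion_iUnion]
    exact iUnion₂_congr hU

lemma isStratified_of_isOpen {n : ℕ} {S : Set (Fin n → ℂ)} (hS : IsOpen S) : IsStratified S := by
  obtain ⟨Ps, hc, hP, hcov⟩ := exists_countable_subset_sUnion_of_locally (S := S)
    (p := fun P => IsPatch n P ∧ P ⊆ S) fun x hx => by
      obtain ⟨r, hr, hball⟩ := Metric.isOpen_iff.1 hS x hx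
      exact ⟨_, ⟨isPatch_ball x hr, hball⟩, _, ball_mem_nhds x hr, inter_subset_left⟩
  exact ⟨Ps, hc, fun P hPm => ⟨n, (hP P hPm).1⟩,
    (sUnion_subset fun P hPm => (hP P hPm).2).antisymm hcov⟩

lemma isStratified_zeros_inter_patch {ι : Type*} {n : ℕ}
    (hstrat : ∀ {V : Set (Fin n → ℂ)}, IsOpen V → ∀ {f : ι → (Fin n → ℂ) → ℂ},
      (∀ i, AnalyticOnNhd ℂ (f i) V) → IsStratified {x ∈ V | ∀ i, f i x = 0})
    {V : Set E} {f : ι → E → ℂ} (hf : ∀ i, AnalyticOnNhd ℂ (f i) V) {P : Set E}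
    (hP : IsPatch n P) (hPV : P ⊆ V) : IsStratified {x ∈ P | ∀ i, f i x = 0} := by
  obtain ⟨φ, c, r, -, hφ, hφinj, rfl⟩ := hP
  have hmaps : MapsTo φ (ball c r) V := mapsTo_iff_image_subset.2 hPV
  have hpull : IsStratified {s ∈ ball c r | ∀ i, f i (φ s) = 0} :=
    hstrat isOpen_ball fun i s hs => (hf i _ (hmaps hs)).comp (hφ s hs)
  convert hpull.image (hφ.mono (sep_subset _ _)) (hφinj.mono (sep_subset _ _)) using 1
  ext x
  constructor
  · rintro ⟨⟨s, hs, rfl⟩, hfs⟩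
    exact ⟨s, ⟨hs, hfs⟩, rfl⟩
  · rintro ⟨s, ⟨hs, hfs⟩, rfl⟩
    exact ⟨⟨s, hs, rfl⟩, hfs⟩

theorem isStratified_zeros_pi {ι : Type*} [Finite ι] (n : ℕ) :
    ∀ {V : Set (Fin n → ℂ)}, IsOpen V → ∀ {f : ι → (Fin n → ℂ) → ℂ},
      (∀ i, AnalyticOnNhd ℂ (f i) V) → IsStratified {x ∈ V | ∀ i, f i x = 0} := by
  induction n with
  | zero => exact fun _ _ _ => isStratified_of_isOpen (isOpen_discrete _)
  | succ n ih =>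
    intro V hV f hf
    set S := {x ∈ V | ∀ i, f i x = 0}
    choose Ps hc hP hcov using fun i =>
      exists_countable_isPatch_cover_zeros (Module.finrank_fin_fun ℂ) hV (hf i)
    have hS : S = interior S ∪ ⋃ P ∈ ⋃ i, Ps i, {x ∈ P | ∀ i, f i x = 0} := by
      refine subset_antisymm (fun x hx => ?_) (union_subset interior_subset (iUnion₂_subset ?_))
      · by_cases hall : ∀ i, ∀ᶠ y in 𝓝 x, f i y = 0
        · exact Or.inl (mem_interior_iff_mem_nhds.2
            (inter_mem (hV.mem_nhds hx.1) (eventually_all.2 hall)))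
        · obtain ⟨i, hi⟩ := not_forall.1 hall
          obtain ⟨P, hPi, hxP⟩ := hcov i ⟨hx.1, hx.2 i, hi⟩
          exact Or.inr (mem_iUnion₂.2 ⟨P, mem_iUnion.2 ⟨i, hPi⟩, hxP, hx.2⟩)
      · intro P hPm x hx
        obtain ⟨i, hPi⟩ := mem_iUnion.1 hPm
        exact ⟨(hP i P hPi).2 hx.1, hx.2⟩
    rw [hS]
    refine (isStratified_of_isOpen isOpen_interior).union
      (.biUnion (countable_iUnion hc) fun P hPm => ?_)
    obtain ⟨i, hPi⟩ := mem_iUnion.1 hPm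
    exact isStratified_zeros_inter_patch ih hf (hP i P hPi).1 (hP i P hPi).2

theorem isStratified_zeros [FiniteDimensional ℂ E] {ι : Type*} [Finite ι] {V : Set E}
    (hV : IsOpen V) {f : ι → E → ℂ} (hf : ∀ i, AnalyticOnNhd ℂ (f i) V) :
    IsStratified {x ∈ V | ∀ i, f i x = 0} := by
  let e : (Fin (Module.finrank ℂ E) → ℂ) ≃L[ℂ] E := ContinuousLinearEquiv.ofFinrankEq (by simp)
  have hpull := isStratified_zeros_pi _ (hV.preimage e.continuous)
    fun i s hs => (hf i (e s) hs).comp (e.toContinuousLinearMap.analyticAt s)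
  convert hpull.image (e.toContinuousLinearMap.analyticOnNhd _) e.injective.injOn using 1
  exact (image_preimage_eq {x ∈ V | ∀ i, f i x = 0} e.surjective).symm

end Patches

section CompactAnalyticSets

open Metric Set

lemma interior_eq_empty_of_countable_frontier {K : Set ℂ} (hK : IsCompact K)
    (hc : (frontier K).Countable) : interior K = ∅ := by
  by_contra! hint
  have hconn : IsConnected (frontier K)ᶜ := hc.isConnected_compl_of_one_lt_rank (by simp)
  have hcover : (frontier K)ᶜ ⊆ interior K ∪ Kᶜ := fun x hx => by
    by_contra! h
    simp only [mem_union, mem_compl_iff, not_or, not_not] at h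
    exact hx ⟨subset_closure h.2, h.1⟩
  obtain ⟨x, hx⟩ := hint
  obtain ⟨y, hy⟩ : Kᶜ.Nonempty := nonempty_compl.2 hK.ne_univ
  obtain ⟨z, -, hzint, hzK⟩ := hconn.isPreconnected _ _ isOpen_interior hK.isClosed.isOpen_compl
    hcover ⟨x, fun h => h.2 hx, hx⟩ ⟨y, fun h => hy (hK.isClosed.frontier_subset h), hy⟩
  exact hzK (interior_subset hzint)

variable {E : Type*} [NormedAddCommGroup E] [NormedSpace ℂ E]

lemma IsPatch.subsingleton_image_or_isOpen_image {k : ℕ} {P : Set E} (hP : IsPatch k P) {g : E → ℂ}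
    (hg : AnalyticOnNhd ℂ g P) : (g '' P).Subsingleton ∨ IsOpen (g '' P) := by
  obtain ⟨φ, c, r, -, hφ, -, rfl⟩ := hP
  have hgφ : AnalyticOnNhd ℂ (g ∘ φ) (ball c r) :=
    hg.comp hφ (mapsTo_image φ _)
  rw [← image_comp]
  rcases hgφ.is_constant_or_isOpen (convex_ball c r).isPreconnected with ⟨w, hw⟩ | hopen
  · exact .inl (subsingleton_singleton.anti (image_subset_iff.2 hw))
  · exact .inr (hopen _ subset_rfl isOpen_ball)

lemma IsStratified.interior_image_eq_empty {K : Set E} (hK : IsStratified K) (hKc : IsCompact K)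
    {g : E → ℂ} (hg : AnalyticOnNhd ℂ g K) : interior (g '' K) = ∅ := by
  have hgKc : IsCompact (g '' K) := hKc.image_of_continuousOn hg.continuousOn
  obtain ⟨Ps, hc, hP, rfl⟩ := hK
  refine interior_eq_empty_of_countable_frontier hgKc <| Countable.mono (fun w hw => ?_) <|
    (hc.mono (sep_subset Ps fun P => (g '' P).Subsingleton)).biUnion fun P hPm => hPm.2.countable
  obtain ⟨x, ⟨P, hPm, hxP⟩, rfl⟩ := hgKc.isClosed.frontier_subset hw
  obtain ⟨k, hk⟩ := hP P hPm
  have hPsub : P ⊆ ⋃₀ Ps := subset_sUnion_of_mem hPm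
  rcases hk.subsingleton_image_or_isOpen_image (hg.mono hPsub) with hsub | hopen
  · exact mem_iUnion₂.2 ⟨P, ⟨hPm, hsub⟩, x, hxP, rfl⟩
  · exact absurd (interior_maximal (image_mono hPsub) hopen ⟨x, hxP, rfl⟩) hw.2

lemma IsStratified.countable_of_isCompact {K : Set E} (hK : IsStratified K) (hKc : IsCompact K) :
    K.Countable := by
  have hint {g : E → ℂ} (hg : AnalyticOnNhd ℂ g K) := hK.interior_image_eq_empty hKc hg
  obtain ⟨Ps, hc, hP, rfl⟩ := hK
  refine hc.sUnion fun P hPm => Subsingleton.countable fun x hx y hy => ?_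
  obtain ⟨k, hk⟩ := hP P hPm
  by_contra hxy
  obtain ⟨ℓ, hℓ⟩ := SeparatingDual.exists_separating_of_ne (R := ℂ) hxy
  rcases hk.subsingleton_image_or_isOpen_image (ℓ.analyticOnNhd P) with hsub | hopen
  · exact hℓ (hsub (mem_image_of_mem ℓ hx) (mem_image_of_mem ℓ hy))
  · have := interior_maximal (image_mono (subset_sUnion_of_mem hPm)) hopen (mem_image_of_mem ℓ hx)
    rwa [hint (ℓ.analyticOnNhd _)] at this

end CompactAnalyticSets

/-! ### Holomorphic maps with an isolated zero are open there -/

section OpenMapping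

open Metric Set

variable {E F : Type*} [NormedAddCommGroup E] [NormedSpace ℂ E]
  [NormedAddCommGroup F] [NormedSpace ℂ F]

lemma analyticAt_det [FiniteDimensional ℂ E] (A : E →L[ℂ] E) :
    AnalyticAt ℂ (fun A : E →L[ℂ] E => A.det) A := by
  classical
  let b := Module.finBasis ℂ E
  let entry (i j) : (E →L[ℂ] E) →L[ℂ] ℂ :=
    (LinearMap.toContinuousLinearMap (b.coord i)).comp (ContinuousLinearMap.apply ℂ E (b j))
  have hdet : (fun A : E →L[ℂ] E => A.det) = fun A => ∑ σ : Equiv.Perm _,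
      ((Equiv.Perm.sign σ : ℤ) : ℂ) * ∏ j, entry (σ j) j A := by
    funext A
    rw [ContinuousLinearMap.det, ← LinearMap.det_toMatrix b, Matrix.det_apply]
    refine Finset.sum_congr rfl fun σ _ => ?_
    simp [entry, LinearMap.toMatrix_apply, Units.smul_def]
  rw [hdet]
  exact Finset.analyticAt_fun_sum _ fun σ _ => analyticAt_const.mul <|
    Finset.analyticAt_fun_prod _ fun j _ => (entry (σ j) j).analyticAt A

lemma map_nhds_eq_of_det_fderiv_ne_zero [FiniteDimensional ℂ E] {G : E → E} {z : E}
    (hG : AnalyticAt ℂ G z) (hz : (fderiv ℂ G z).det ≠ 0) : map G (𝓝 z) = 𝓝 (G z) := by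
  have := FiniteDimensional.complete ℂ E
  refine HasStrictFDerivAt.map_nhds_eq_of_equiv
    (f' := (fderiv ℂ G z).toContinuousLinearEquivOfDetNeZero hz) ?_
  rw [ContinuousLinearMap.coe_toContinuousLinearEquivOfDetNeZero]
  exact hG.hasStrictFDerivAt

lemma IsPatch.dimH_realCone_image_le [CompleteSpace F] {n : ℕ} {P : Set E} (hP : IsPatch n P)
    {G : E → F} (hG : AnalyticOnNhd ℂ G P) :
    dimH {y | ∃ τ : ℝ, ∃ x ∈ P, y = τ • G x} ≤ (2 * n + 1 : ℕ) := by
  obtain ⟨φ, c, ρ, -, hφ, -, rfl⟩ := hP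
  let cone (q : (Fin n → ℂ) × ℝ) : F := q.2 • G (φ q.1)
  have hcone : ContDiffOn ℝ 1 cone (ball c ρ ×ˢ univ) := fun q hq => by
    have hGφ : ContDiffAt ℝ 1 (G ∘ φ) q.1 :=
      (((hG _ (mem_image_of_mem φ hq.1)).comp (hφ q.1 hq.1)).restrictScalars (𝕜 := ℝ)).contDiffAt
    exact (contDiffAt_snd.smul (hGφ.comp q contDiffAt_fst)).contDiffWithinAt
  calc dimH {y | ∃ τ : ℝ, ∃ x ∈ φ '' ball c ρ, y = τ • G x}
      ≤ dimH (cone '' (ball c ρ ×ˢ univ)) := dimH_mono <| by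
        rintro y ⟨τ, _, ⟨s, hs, rfl⟩, rfl⟩
        exact ⟨(s, τ), ⟨hs, mem_univ _⟩, rfl⟩
    _ ≤ dimH (ball c ρ ×ˢ (univ : Set ℝ)) :=
        hcone.dimH_image_le ((convex_ball c ρ).prod convex_univ) subset_rfl
    _ ≤ dimH (univ : Set ((Fin n → ℂ) × ℝ)) := dimH_mono (subset_univ _)
    _ = (2 * n + 1 : ℕ) := by
        rw [Real.dimH_univ_eq_finrank, Module.finrank_prod, finrank_real_of_complex,
          Module.finrank_fin_fun, Module.finrank_self]

lemma dense_compl_realCone_criticalValues [FiniteDimensional ℂ E] {G : E → E} {r : ℝ} (hr : 0 < r)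
    (hG : AnalyticOnNhd ℂ G (ball 0 r)) (hdet : (fderiv ℂ G 0).det ≠ 0) :
    Dense {y | ∃ τ : ℝ, ∃ x ∈ ball 0 r, (fderiv ℂ G x).det = 0 ∧ y = τ • G x}ᶜ := by
  have := FiniteDimensional.complete ℂ E
  rcases subsingleton_or_nontrivial E with hE | hE
  · simp [ContinuousLinearMap.det, LinearMap.det_eq_one_of_subsingleton]
  obtain ⟨n, hn⟩ := Nat.exists_eq_succ_of_ne_zero (Module.finrank_pos (R := ℂ) (M := E)).ne'
  have hJ : AnalyticOnNhd ℂ (fun z => (fderiv ℂ G z).det) (ball 0 r) := fun z hz =>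
    (analyticAt_det _).comp (hG z hz).fderiv
  have hJne (x : E) (hx : x ∈ ball 0 r) : ¬ ∀ᶠ z in 𝓝 x, (fderiv ℂ G z).det = 0 := fun h0 =>
    hdet (hJ.eqOn_zero_of_preconnected_of_eventuallyEq_zero (convex_ball 0 r).isPreconnected hx h0
      (mem_ball_self hr))
  obtain ⟨Ps, hc, hP, hcov⟩ := exists_countable_isPatch_cover_zeros hn isOpen_ball hJ
  let cone (P : Set E) : Set E := {y | ∃ τ : ℝ, ∃ x ∈ P, y = τ • G x}
  have hdim : dimH (⋃ P ∈ Ps, cone P) < Module.finrank ℝ E := by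
    rw [dimH_bUnion hc, finrank_real_of_complex, hn]
    refine (iSup₂_le fun P hPm =>
      (hP P hPm).1.dimH_realCone_image_le (hG.mono (hP P hPm).2)).trans_lt ?_
    exact_mod_cast (by omega : 2 * n + 1 < 2 * (n + 1))
  refine (dense_compl_of_dimH_lt_finrank hdim).mono (compl_subset_compl.2 ?_)
  rintro y ⟨τ, x, hx, hx0, rfl⟩
  obtain ⟨P, hPm, hxP⟩ := hcov ⟨hx, hx0, hJne x hx⟩
  exact mem_iUnion₂.2 ⟨P, hPm, τ, x, hxP, rfl⟩

lemma image_closedBall_mem_nhds_of_regular [FiniteDimensional ℂ E] {G : E → E} {r : ℝ}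
    (hG : AnalyticOnNhd ℂ G (closedBall 0 r)) {z : E} (hz : z ∈ ball 0 r)
    (hdet : (fderiv ℂ G z).det ≠ 0) : G '' closedBall 0 r ∈ 𝓝 (G z) := by
  rw [← map_nhds_eq_of_det_fderiv_ne_zero (hG z (ball_subset_closedBall hz)) hdet]
  exact image_mem_map (mem_of_superset (isOpen_ball.mem_nhds hz) ball_subset_closedBall)

-- The set of `t` with `t • y` in the image is closed, and open to the right because `t • y` is a
-- regular value attained off the bounding sphere.
lemma mem_image_of_segment_regular [FiniteDimensional ℂ E] {G : E → E} {r δ : ℝ} (hr : 0 < r)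
    (hG : AnalyticOnNhd ℂ G (closedBall 0 r)) (h0 : G 0 = 0)
    (hδ : ∀ z ∈ sphere (0 : E) r, δ ≤ ‖G z‖) (hdet : (fderiv ℂ G 0).det ≠ 0) {y : E}
    (hy : ‖y‖ < δ)
    (hreg : ¬ ∃ τ : ℝ, ∃ x ∈ ball 0 r, (fderiv ℂ G x).det = 0 ∧ y = τ • G x) :
    y ∈ G '' closedBall 0 r := by
  have := FiniteDimensional.proper ℂ E
  set A := G '' closedBall 0 r
  have hA : IsClosed A :=
    ((isCompact_closedBall _ _).image_of_continuousOn hG.continuousOn).isClosed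
  have hray : Continuous fun t : ℝ => t • y := by fun_prop
  have hAnhds (t : ℝ) (htA : t • y ∈ A) (ht : t ∈ Ico (0 : ℝ) 1) : A ∈ 𝓝 (t • y) := by
    rcases ht.1.eq_or_lt with rfl | htpos
    · simpa [h0] using image_closedBall_mem_nhds_of_regular hG (mem_ball_self hr) hdet
    · obtain ⟨z, hz, hzt⟩ := htA
      have hzr : ‖z‖ ≠ r := fun hzr => by
        have := hδ z (mem_sphere_zero_iff_norm.2 hzr)
        rw [hzt, norm_smul, Real.norm_of_nonneg ht.1] at this
        nlinarith [norm_nonneg y, ht.2]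
      have hzball : z ∈ ball 0 r :=
        mem_ball_zero_iff.2 ((mem_closedBall_zero_iff.1 hz).lt_of_ne hzr)
      rw [← hzt]
      refine image_closedBall_mem_nhds_of_regular hG hzball fun hz0 => hreg ?_
      exact ⟨t⁻¹, z, hzball, hz0, by rw [hzt, inv_smul_smul₀ htpos.ne']⟩
  have hseg : Icc (0 : ℝ) 1 ⊆ {t : ℝ | t • y ∈ A} := by
    refine IsClosed.Icc_subset_of_forall_mem_nhdsWithin
      ((hA.preimage hray).inter isClosed_Icc) ⟨0, by simp [hr.le], by simp [h0]⟩ ?_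
    rintro t ⟨htA, ht⟩
    exact mem_nhdsWithin_of_mem_nhds (hray.continuousAt.preimage_mem_nhds (hAnhds t htA ht))
  simpa using hseg (right_mem_Icc.2 zero_le_one)

lemma ball_subset_image_of_det_fderiv_ne_zero [FiniteDimensional ℂ E] {G : E → E} {r δ : ℝ}
    (hr : 0 < r) (hG : AnalyticOnNhd ℂ G (closedBall 0 r)) (h0 : G 0 = 0)
    (hδ : ∀ z ∈ sphere (0 : E) r, δ ≤ ‖G z‖) (hdet : (fderiv ℂ G 0).det ≠ 0) :
    ball 0 δ ⊆ G '' closedBall 0 r := by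
  have := FiniteDimensional.proper ℂ E
  have hA : IsClosed (G '' closedBall 0 r) :=
    ((isCompact_closedBall _ _).image_of_continuousOn hG.continuousOn).isClosed
  have hdense := dense_compl_realCone_criticalValues hr (hG.mono ball_subset_closedBall) hdet
  refine (hdense.open_subset_closure_inter isOpen_ball).trans (closure_minimal ?_ hA)
  rintro y ⟨hy, hyreg⟩
  exact mem_image_of_segment_regular hr hG h0 hδ hdet (mem_ball_zero_iff.1 hy) hyreg

lemma exists_det_add_smul_id_ne_zero [FiniteDimensional ℂ E] (A : E →L[ℂ] E) {η : ℝ} (hη : 0 < η) :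
    ∃ ε ∈ Ioo 0 η, (A + (ε : ℂ) • ContinuousLinearMap.id ℂ E).det ≠ 0 := by
  have hfin : {ε : ℝ | Module.End.HasEigenvalue A.toLinearMap (-(ε : ℂ))}.Finite :=
    (Module.End.finite_hasEigenvalue A.toLinearMap).preimage
      (neg_injective.comp Complex.ofReal_injective).injOn
  obtain ⟨ε, hε, hgood⟩ := ((Ioo_infinite hη).sdiff hfin).nonempty
  refine ⟨ε, hε, fun hdet => hgood ?_⟩
  obtain ⟨v, hv, hv0⟩ :=
    Submodule.exists_mem_ne_zero_of_ne_bot (LinearMap.bot_lt_ker_of_det_eq_zero hdet).ne'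
  refine Module.End.hasEigenvalue_of_hasEigenvector (x := v) ⟨?_, hv0⟩
  rw [Module.End.mem_eigenspace_iff, neg_smul]
  exact eq_neg_of_add_eq_zero_left hv

theorem ball_subset_image_closedBall [FiniteDimensional ℂ E] {G : E → E} {r δ : ℝ}
    (hr : 0 < r) (hG : AnalyticOnNhd ℂ G (closedBall 0 r)) (h0 : G 0 = 0)
    (hδ : ∀ z ∈ sphere (0 : E) r, δ ≤ ‖G z‖) : ball 0 δ ⊆ G '' closedBall 0 r := by
  have := FiniteDimensional.proper ℂ E
  have hA : IsClosed (G '' closedBall 0 r) :=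
    ((isCompact_closedBall _ _).image_of_continuousOn hG.continuousOn).isClosed
  intro y hy
  rw [← hA.closure_eq, Metric.mem_closure_iff]
  intro e he
  have hyδ : 0 < δ - ‖y‖ := sub_pos.2 (mem_ball_zero_iff.1 hy)
  obtain ⟨ε, ⟨hε0, hε⟩, hdet⟩ :=
    exists_det_add_smul_id_ne_zero (fderiv ℂ G 0) (div_pos (lt_min he hyδ) hr)
  obtain ⟨hεe, hεδ⟩ := lt_min_iff.1 ((lt_div_iff₀ hr).1 hε)
  have hnorm (z : E) : ‖(ε : ℂ) • z‖ = ε * ‖z‖ := by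
    rw [norm_smul, Complex.norm_real, Real.norm_of_nonneg hε0.le]
  let G' (z : E) : E := G z + (ε : ℂ) • z
  have hG' : AnalyticOnNhd ℂ G' (closedBall 0 r) := fun z hz =>
    (hG z hz).fun_add (analyticAt_const.fun_smul analyticAt_id)
  have hfderiv : fderiv ℂ G' 0 = fderiv ℂ G 0 + (ε : ℂ) • ContinuousLinearMap.id ℂ E :=
    ((hG 0 (mem_closedBall_self hr.le)).differentiableAt.hasFDerivAt.add
      ((hasFDerivAt_id (𝕜 := ℂ) (0 : E)).const_smul (ε : ℂ))).fderiv
  have hδ' : ∀ z ∈ sphere (0 : E) r, δ - ε * r ≤ ‖G' z‖ := fun z hz => by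
    have hle := norm_sub_le_norm_add (G z) ((ε : ℂ) • z)
    rw [hnorm, mem_sphere_zero_iff_norm.1 hz] at hle
    exact (sub_le_sub_right (hδ z hz) _).trans hle
  obtain ⟨z, hz, rfl⟩ := ball_subset_image_of_det_fderiv_ne_zero hr hG' (by simp [G', h0]) hδ'
    (hfderiv ▸ hdet) (mem_ball_zero_iff.2 (by linarith : ‖y‖ < δ - ε * r))
  refine ⟨G z, mem_image_of_mem G hz, ?_⟩
  rw [dist_eq_norm, add_sub_cancel_left, hnorm]
  exact (mul_le_mul_of_nonneg_left (mem_closedBall_zero_iff.1 hz) hε0.le).trans_lt hεe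

lemma nhds_zero_le_map_of_isolated_zero_endo [FiniteDimensional ℂ E] {G : E → E}
    (hG : AnalyticAt ℂ G 0) (h0 : G 0 = 0) (hiso : ∀ᶠ z in 𝓝 0, G z = 0 → z = 0) :
    𝓝 0 ≤ map G (𝓝 0) := by
  have := FiniteDimensional.proper ℂ E
  intro U hU
  obtain ⟨r, hr, hball⟩ := Metric.nhds_basis_closedBall.mem_iff.1
    (inter_mem (mem_map.1 hU) (hG.eventually_analyticAt.and hiso))
  have hGr : AnalyticOnNhd ℂ G (closedBall 0 r) := fun z hz => (hball hz).2.1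
  obtain ⟨δ, hδ, hle⟩ : ∃ δ > 0, ∀ z ∈ sphere (0 : E) r, δ ≤ ‖G z‖ := by
    refine (isCompact_sphere (0 : E) r).exists_forall_le'
      (hGr.continuousOn.mono sphere_subset_closedBall).norm fun z hz => norm_pos_iff.2 fun hGz => ?_
    have hz0 : z = 0 := (hball (sphere_subset_closedBall hz)).2.2 hGz
    exact ne_of_mem_sphere hz hr.ne' hz0
  exact mem_of_superset (ball_mem_nhds 0 hδ) <| (ball_subset_image_closedBall hr hGr h0 hle).trans
    (image_subset_iff.2 fun z hz => (hball hz).1)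

theorem nhds_zero_le_map_of_isolated_zero [FiniteDimensional ℂ E] [FiniteDimensional ℂ F]
    (hEF : Module.finrank ℂ E = Module.finrank ℂ F) {G : E → F} (hG : AnalyticAt ℂ G 0)
    (h0 : G 0 = 0) (hiso : ∀ᶠ z in 𝓝 0, G z = 0 → z = 0) : 𝓝 0 ≤ map G (𝓝 0) := by
  let e : F ≃L[ℂ] E := ContinuousLinearEquiv.ofFinrankEq hEF.symm
  have hle := nhds_zero_le_map_of_isolated_zero_endo (G := e ∘ G)
    ((e.toContinuousLinearMap.analyticAt _).comp hG) (by simp [h0]) (by simpa using hiso)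
  have hmap : map e (𝓝 0) = 𝓝 0 := by simpa using e.toHomeomorph.map_nhds_eq 0
  rwa [← map_le_map_iff e.injective, hmap, map_map]

end OpenMapping

/-! ### Hausdorff dimension of curve germs -/

section CurveGerms

open Metric Set

variable {E : Type*} [NormedAddCommGroup E] [NormedSpace ℂ E]

lemma IsPatch.not_countable {k : ℕ} (hk : k ≠ 0) {P : Set E} (hP : IsPatch k P) :
    ¬ P.Countable := by
  obtain ⟨φ, c, r, hr, -, hφinj, rfl⟩ := hP
  intro hcount
  have hdim := (countable_of_injective_of_countable_image hφinj hcount).dimH_zero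
  rw [Real.dimH_of_mem_nhds (ball_mem_nhds c hr), finrank_real_of_complex,
    Module.finrank_fin_fun] at hdim
  have : 2 * k = 0 := by exact_mod_cast hdim
  omega

lemma IsPatch.dimH_le [CompleteSpace E] {k : ℕ} {P : Set E} (hP : IsPatch k P) :
    dimH P ≤ (2 * k : ℕ) := by
  obtain ⟨φ, c, r, -, hφ, -, rfl⟩ := hP
  have hφ' : ContDiffOn ℝ 1 φ (ball c r) := fun s hs =>
    ((hφ s hs).restrictScalars (𝕜 := ℝ)).contDiffAt.contDiffWithinAt
  calc dimH (φ '' ball c r) ≤ dimH (ball c r) := hφ'.dimH_image_le (convex_ball c r) subset_rfl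
    _ ≤ dimH (univ : Set (Fin k → ℂ)) := dimH_mono (subset_univ _)
    _ = (2 * k : ℕ) := by
      rw [Real.dimH_univ_eq_finrank, finrank_real_of_complex, Module.finrank_fin_fun]

lemma IsPatch.le_one_of_countable_fibres {k : ℕ} {P : Set E} (hP : IsPatch k P) {t : E → ℂ}
    (ht : AnalyticOnNhd ℂ t P) (hfib : ∀ c, {x ∈ P | t x = c}.Countable) : k ≤ 1 := by
  have hPuncount {k' : ℕ} (hk' : k' ≠ 0) {R : Set E} (hR : IsPatch k' R) (hRP : R ⊆ P) {c : ℂ}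
      (hRc : ∀ x ∈ R, t x = c) : False :=
    hR.not_countable hk' ((hfib c).mono fun x hx => mem_sep (hRP hx) (hRc x hx))
  by_contra! hk
  obtain ⟨m, rfl⟩ : ∃ m, k = m + 1 + 1 := ⟨k - 2, by omega⟩
  have hP' := hP
  obtain ⟨φ, c, r, hr, hφ, hφinj, rfl⟩ := hP
  have htφ : AnalyticOnNhd ℂ (t ∘ φ) (ball c r) := ht.comp hφ (mapsTo_image φ _)
  by_cases hall : ∀ s ∈ ball c r, fderiv ℂ (t ∘ φ) s = 0
  · refine hPuncount (by omega) hP' subset_rfl (c := t (φ c)) (forall_mem_image.2 fun s hs => ?_)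
    exact isOpen_ball.is_const_of_fderiv_eq_zero (convex_ball c r).isPreconnected
      htφ.differentiableOn hall hs (mem_ball_self hr)
  · push Not at hall
    obtain ⟨s, hs, hne⟩ := hall
    obtain ⟨R, hRsub, hR, hRt, -⟩ := exists_isPatch_of_fderiv_ne_zero
      (Module.finrank_fin_fun ℂ) (htφ s hs) hne (isOpen_ball.mem_nhds hs)
    exact hPuncount m.succ_ne_zero (hR.image (hφ.mono hRsub) (hφinj.mono hRsub))
      (image_mono hRsub) (forall_mem_image.2 hRt)

lemma isCompact_sep_forall_eq_zero {X κ : Type*} [TopologicalSpace X] [T2Space X] {K : Set X}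
    (hK : IsCompact K) {g : κ → X → ℂ} (hg : ∀ i, ContinuousOn (g i) K) :
    IsCompact {x ∈ K | ∀ i, g i x = 0} := by
  have hpre : {x ∈ K | ∀ i, g i x = 0} = K ∩ (fun x i => g i x) ⁻¹' {(0 : κ → ℂ)} := by
    ext x
    simp [funext_iff]
  rw [hpre]
  exact hK.of_isClosed_subset ((continuousOn_pi.2 hg).preimage_isClosed_of_isClosed hK.isClosed
    isClosed_singleton) inter_subset_left

variable [FiniteDimensional ℂ E] {κ : Type*} {g : κ → E → ℂ} {t : E → ℂ}

-- A fibre over a value smaller than `|t|` on the bounding sphere misses that sphere, so it is a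
-- compact analytic set.
lemma countable_fibre_of_lt [Finite κ] {r m : ℝ} (hg : ∀ i, AnalyticOnNhd ℂ (g i) (closedBall 0 r))
    (ht : AnalyticOnNhd ℂ t (closedBall 0 r))
    (hm : ∀ x ∈ sphere (0 : E) r, (∀ i, g i x = 0) → m ≤ ‖t x‖) {c : ℂ} (hc : ‖c‖ < m) :
    {x ∈ ball 0 r | (∀ i, g i x = 0) ∧ t x = c}.Countable := by
  have := FiniteDimensional.proper ℂ E
  let h : Option κ → E → ℂ := fun o => o.elim (fun x => t x - c) g
  have hh : ∀ o, AnalyticOnNhd ℂ (h o) (closedBall 0 r)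
    | none => ht.sub analyticOnNhd_const
    | some i => hg i
  have hzeros (x : E) : (∀ o, h o x = 0) ↔ (∀ i, g i x = 0) ∧ t x = c := by
    simp [h, Option.forall, sub_eq_zero, and_comm]
  simp only [← hzeros]
  refine (isStratified_zeros isOpen_ball fun o =>
    (hh o).mono ball_subset_closedBall).countable_of_isCompact ?_
  convert isCompact_sep_forall_eq_zero (isCompact_closedBall (0 : E) r)
    fun o => (hh o).continuousOn using 1
  refine subset_antisymm (fun x hx => ⟨ball_subset_closedBall hx.1, hx.2⟩) fun x hx => ⟨?_, hx.2⟩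
  obtain ⟨hgx, htx⟩ := (hzeros x).1 hx.2
  refine mem_ball_zero_iff.2 ((mem_closedBall_zero_iff.1 hx.1).lt_of_ne fun hxr => hc.not_ge ?_)
  exact htx ▸ hm x (mem_sphere_zero_iff_norm.2 hxr) hgx

lemma exists_isOpen_countable_fibres [Finite κ] (hg : ∀ i, AnalyticAt ℂ (g i) 0)
    (ht : AnalyticAt ℂ t 0) (ht0 : t 0 = 0)
    (hiso : ∀ᶠ x in 𝓝 0, (∀ i, g i x = 0) → t x = 0 → x = 0) :
    ∃ V : Set E, IsOpen V ∧ 0 ∈ V ∧ (∀ i, AnalyticOnNhd ℂ (g i) V) ∧ AnalyticOnNhd ℂ t V ∧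
      ∀ c, {x ∈ V | (∀ i, g i x = 0) ∧ t x = c}.Countable := by
  have := FiniteDimensional.proper ℂ E
  obtain ⟨r, hr, hball⟩ := nhds_basis_closedBall.mem_iff.1
    ((eventually_all.2 fun i => (hg i).eventually_analyticAt).and
      (ht.eventually_analyticAt.and hiso))
  have hgr (i) : AnalyticOnNhd ℂ (g i) (closedBall 0 r) := fun x hx => (hball hx).1 i
  have htr : AnalyticOnNhd ℂ t (closedBall 0 r) := fun x hx => (hball hx).2.1
  obtain ⟨m, hm, hmle⟩ : ∃ m > 0, ∀ x ∈ {x ∈ sphere (0 : E) r | ∀ i, g i x = 0}, m ≤ ‖t x‖ := by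
    refine (isCompact_sep_forall_eq_zero (isCompact_sphere (0 : E) r) fun i =>
      (hgr i).continuousOn.mono sphere_subset_closedBall).exists_forall_le'
      (htr.continuousOn.norm.mono fun x hx => sphere_subset_closedBall hx.1) fun x hx => ?_
    exact norm_pos_iff.2 fun htx => ne_of_mem_sphere hx.1 hr.ne'
      ((hball (sphere_subset_closedBall hx.1)).2.2 hx.2 htx)
  let V := ball (0 : E) r ∩ (fun x => ‖t x‖) ⁻¹' Iio m
  have hVsub : V ⊆ closedBall 0 r := inter_subset_left.trans ball_subset_closedBall
  refine ⟨V, (htr.continuousOn.mono ball_subset_closedBall).norm.isOpen_inter_preimage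
    isOpen_ball isOpen_Iio, ⟨mem_ball_self hr, by simpa [ht0] using hm⟩,
    fun i => (hgr i).mono hVsub, htr.mono hVsub, fun c => ?_⟩
  by_cases hc : ‖c‖ < m
  · exact (countable_fibre_of_lt hgr htr (fun x hx hgx => hmle x ⟨hx, hgx⟩) hc).mono
      fun x hx => mem_sep hx.1.1 hx.2
  · refine countable_empty.mono fun x hx => hc ?_
    exact hx.2.2 ▸ hx.1.2

lemma exists_dimH_zeros_inter_le_two [Finite κ] (hg : ∀ i, AnalyticAt ℂ (g i) 0)
    (ht : AnalyticAt ℂ t 0) (ht0 : t 0 = 0)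
    (hiso : ∀ᶠ x in 𝓝 0, (∀ i, g i x = 0) → t x = 0 → x = 0) :
    ∃ V ∈ 𝓝 (0 : E), dimH ({x | ∀ i, g i x = 0} ∩ V) ≤ 2 := by
  have := FiniteDimensional.complete ℂ E
  obtain ⟨V, hVopen, h0V, hgV, htV, hfib⟩ := exists_isOpen_countable_fibres hg ht ht0 hiso
  obtain ⟨Ps, hc, hP, hPs⟩ := isStratified_zeros hVopen hgV
  refine ⟨V, hVopen.mem_nhds h0V, ?_⟩
  rw [inter_comm]
  change dimH {x ∈ V | ∀ i, g i x = 0} ≤ 2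
  rw [← hPs, dimH_sUnion hc]
  refine iSup₂_le fun P hPm => ?_
  obtain ⟨k, hk⟩ := hP P hPm
  have hPsub : P ⊆ {x ∈ V | ∀ i, g i x = 0} := hPs ▸ subset_sUnion_of_mem hPm
  have hk1 : k ≤ 1 := hk.le_one_of_countable_fibres (htV.mono fun x hx => (hPsub hx).1) fun c =>
    (hfib c).mono fun x hx => mem_sep (hPsub hx.1).1 ⟨(hPsub hx.1).2, hx.2⟩
  exact hk.dimH_le.trans (by exact_mod_cast (by omega : 2 * k ≤ 2))

lemma image_zeros_inter_mem_nhds [Fintype κ] (hκ : Fintype.card κ + 1 = Module.finrank ℂ E)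
    (hg : ∀ i, AnalyticAt ℂ (g i) 0) (ht : AnalyticAt ℂ t 0) (hg0 : ∀ i, g i 0 = 0) (ht0 : t 0 = 0)
    (hiso : ∀ᶠ x in 𝓝 0, (∀ i, g i x = 0) → t x = 0 → x = 0) {U : Set E} (hU : U ∈ 𝓝 0) :
    t '' ({x | ∀ i, g i x = 0} ∩ U) ∈ 𝓝 0 := by
  let G (x : E) : (κ → ℂ) × ℂ := (fun i => g i x, t x)
  have hopen : 𝓝 0 ≤ map G (𝓝 0) := nhds_zero_le_map_of_isolated_zero
    (by simp [← hκ]) ((AnalyticAt.pi hg).prod ht) (by ext <;> simp [G, hg0, ht0])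
    (hiso.mono fun x hx hGx => hx (congrFun (congrArg Prod.fst hGx)) (congrArg Prod.snd hGx))
  have haxis : Tendsto (fun c : ℂ => ((0 : κ → ℂ), c)) (𝓝 0) (𝓝 0) :=
    (by fun_prop : Continuous fun c : ℂ => ((0 : κ → ℂ), c)).tendsto 0
  filter_upwards [haxis (hopen (image_mem_map hU))]
  rintro c ⟨x, hx, hGx⟩
  exact ⟨x, ⟨congrFun (congrArg Prod.fst hGx), hx⟩, congrArg Prod.snd hGx⟩

lemma two_le_dimH_zeros_inter [Fintype κ] (hκ : Fintype.card κ + 1 = Module.finrank ℂ E)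
    (hg : ∀ i, AnalyticAt ℂ (g i) 0) (ht : AnalyticAt ℂ t 0) (hg0 : ∀ i, g i 0 = 0) (ht0 : t 0 = 0)
    (hiso : ∀ᶠ x in 𝓝 0, (∀ i, g i x = 0) → t x = 0 → x = 0) {U : Set E} (hU : U ∈ 𝓝 0) :
    2 ≤ dimH ({x | ∀ i, g i x = 0} ∩ U) := by
  have := FiniteDimensional.complete ℂ E
  obtain ⟨r, hr, hball⟩ := Metric.eventually_nhds_iff_ball.1 ht.eventually_analyticAt
  have htC1 : ContDiffOn ℝ 1 t (ball 0 r) := fun x hx =>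
    ((hball x hx).restrictScalars (𝕜 := ℝ)).contDiffAt.contDiffWithinAt
  let S := {x | ∀ i, g i x = 0} ∩ (U ∩ ball 0 r)
  calc 2 = dimH (t '' S) := by
        rw [Real.dimH_of_mem_nhds (image_zeros_inter_mem_nhds hκ hg ht hg0 ht0 hiso
          (inter_mem hU (ball_mem_nhds 0 hr))), Complex.finrank_real_complex, Nat.cast_ofNat]
    _ ≤ dimH S := htC1.dimH_image_le (convex_ball 0 r) fun x hx => hx.2.2
    _ ≤ dimH ({x | ∀ i, g i x = 0} ∩ U) := dimH_mono fun x hx => ⟨hx.1, hx.2.1⟩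

theorem hasLocalDimH_zeros_of_isolated [Fintype κ] (hκ : Fintype.card κ + 1 = Module.finrank ℂ E)
    (hg : ∀ i, AnalyticAt ℂ (g i) 0) (ht : AnalyticAt ℂ t 0) (hg0 : ∀ i, g i 0 = 0) (ht0 : t 0 = 0)
    (hiso : ∀ᶠ x in 𝓝 0, (∀ i, g i x = 0) → t x = 0 → x = 0) :
    HasLocalDimH {x | ∀ i, g i x = 0} 0 2 :=
  .of_le_of_le (exists_dimH_zeros_inter_le_two hg ht ht0 hiso)
    fun _ hU => two_le_dimH_zeros_inter hκ hg ht hg0 ht0 hiso hU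

end CurveGerms

/-! ### Dilations and leading parts -/

section Dilations

open Metric Set

lemma norm_fderiv_apply_le {E : Type*} [NormedAddCommGroup E] [NormedSpace ℂ E] {f : E → ℂ}
    {q e : E} {C : ℝ} (hf : ∀ s ∈ closedBall (0 : ℂ) 1, DifferentiableAt ℂ f (q + s • e))
    (hC : ∀ s ∈ sphere (0 : ℂ) 1, ‖f (q + s • e)‖ ≤ C) : ‖fderiv ℂ f q e‖ ≤ C := by
  have hline (s : ℂ) : HasDerivAt (fun s : ℂ => q + s • e) e s := by
    simpa using ((hasDerivAt_id s).smul_const e).const_add q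
  have hderiv (s : ℂ) (hs : s ∈ closedBall 0 1) :
      HasDerivAt (fun s : ℂ => f (q + s • e)) (fderiv ℂ f (q + s • e) e) s :=
    (hf s hs).hasFDerivAt.comp_hasDerivAt s (hline s)
  have hdiff : DiffContOnCl ℂ (fun s : ℂ => f (q + s • e)) (ball 0 1) := by
    refine DifferentiableOn.diffContOnCl fun s hs => ?_
    rw [closure_ball _ one_ne_zero] at hs
    exact (hderiv s hs).differentiableAt.differentiableWithinAt
  have hcauchy := Complex.norm_deriv_le_of_forall_mem_sphere_norm_le one_pos hdiff hC
  rw [(hderiv 0 (by simp)).deriv] at hcauchy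
  simpa using hcauchy

variable {E : Type*} [NormedAddCommGroup E] [NormedSpace ℂ E] {δ : ℂ →* (E →L[ℂ] E)}

lemma dilation_inv_apply {l : ℂ} (hl : l ≠ 0) (p : E) : δ l⁻¹ (δ l p) = p := by
  rw [← mul_apply_eq_comp, ← map_mul, inv_mul_cancel₀ hl, map_one, one_apply_eq_self]

lemma exists_one_le_norm_dilation (hδ : Continuous δ) (hδ0 : δ 0 = 0) {p : E} (hp : p ≠ 0)
    (m : ℝ) : ∃ μ : ℝ, m ≤ μ ∧ 1 ≤ ‖δ μ p‖ := by
  have hinv : Tendsto (fun μ : ℝ => ‖δ (μ : ℂ)⁻¹‖) atTop (𝓝 0) := by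
    have hcont : Continuous fun l : ℝ => ‖δ (l : ℂ)‖ := by fun_prop
    simpa [hδ0, Function.comp_def] using (hcont.tendsto 0).comp tendsto_inv_atTop_zero
  obtain ⟨μ, hμsmall, hμm, hμpos⟩ := ((hinv.eventually_le_const (norm_pos_iff.2 hp)).and
    ((eventually_ge_atTop m).and (eventually_gt_atTop 0))).exists
  refine ⟨μ, hμm, ?_⟩
  have hle : ‖p‖ * 1 ≤ ‖p‖ * ‖δ μ p‖ := calc
    ‖p‖ * 1 = ‖δ (μ : ℂ)⁻¹ (δ μ p)‖ := by
      rw [dilation_inv_apply (Complex.ofReal_ne_zero.2 hμpos.ne'), mul_one]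
    _ ≤ ‖δ (μ : ℂ)⁻¹‖ * ‖δ μ p‖ := ContinuousLinearMap.le_opNorm _ _
    _ ≤ ‖p‖ * ‖δ μ p‖ := by gcongr
  exact le_of_mul_le_mul_left hle (norm_pos_iff.2 hp)

lemma eventually_exists_dilation_sphere (hδ : Continuous δ) (hδ0 : δ 0 = 0) {ε : ℝ}
    (hε : 0 < ε) :
    ∀ᶠ p in 𝓝 (0 : E), p ≠ 0 → ∃ l ∈ Ioc (0 : ℝ) ε, ∃ q ∈ sphere (0 : E) 1, δ l q = p := by
  have hsmall : ∀ᶠ p in 𝓝 (0 : E), ‖δ ((ε⁻¹ : ℝ) : ℂ) p‖ < 1 :=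
    (δ ((ε⁻¹ : ℝ) : ℂ)).continuous.norm.continuousAt.eventually_lt continuousAt_const (by simp)
  filter_upwards [hsmall] with p hlt hp
  obtain ⟨m, hm, hle⟩ := exists_one_le_norm_dilation hδ hδ0 hp ε⁻¹
  have hcont : Continuous fun μ : ℝ => ‖δ (μ : ℂ) p‖ := by fun_prop
  obtain ⟨μ, ⟨hεμ, -⟩, hμ⟩ := intermediate_value_Icc hm hcont.continuousOn ⟨hlt.le, hle⟩
  have hμpos : 0 < μ := (inv_pos.2 hε).trans_le hεμ
  refine ⟨μ⁻¹, ⟨inv_pos.2 hμpos, inv_le_of_inv_le₀ hε hεμ⟩, δ μ p, by simpa using hμ, ?_⟩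
  rw [Complex.ofReal_inv, dilation_inv_apply (Complex.ofReal_ne_zero.2 hμpos.ne')]

/-- `P` is the leading part of `f` at `0` with respect to the dilations `δ`: the rescalings
`l ^ k * f (δ l q)` converge to `P`, uniformly on bounded sets, as `l → 0⁺`. The exponent `k` is
minus the weighted order of `f`, or any larger number if `P = 0`. -/
def HasLeadingPart (δ : ℂ →* (E →L[ℂ] E)) (f P : E → ℂ) : Prop :=
  ∃ k : ℤ, ∀ R : ℝ, TendstoUniformlyOn (fun (l : ℝ) q => (l : ℂ) ^ k * f (δ l q)) P (𝓝[>] 0)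
    (closedBall 0 R)

lemma hasLeadingPart_self {f : E → ℂ} {D : ℕ} (hf : ∀ l q, f (δ l q) = l ^ D * f q) :
    HasLeadingPart δ f f := by
  refine ⟨-D, fun R => ?_⟩
  have hconst : TendstoUniformlyOn (fun _ : ℝ => f) f (𝓝[>] 0) (closedBall 0 R) :=
    Metric.tendstoUniformlyOn_iff.2 fun ε hε => by simp [hε]
  refine hconst.congr ?_
  filter_upwards [self_mem_nhdsWithin] with l (hl : 0 < l) q _
  have hl0 : (l : ℂ) ≠ 0 := Complex.ofReal_ne_zero.2 hl.ne'
  simp [hf, hl0]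

lemma eventually_differentiableAt_dilation {f : E → ℂ} (hδ : Continuous δ) (hδ0 : δ 0 = 0)
    (hf : AnalyticAt ℂ f 0) (R : ℝ) :
    ∀ᶠ l : ℝ in 𝓝[>] 0, ∀ q ∈ closedBall (0 : E) R, DifferentiableAt ℂ f (δ l q) := by
  obtain ⟨ρ, hρ, hball⟩ := Metric.eventually_nhds_iff_ball.1 hf.eventually_analyticAt
  have hcont : Continuous fun l : ℝ => ‖δ (l : ℂ)‖ * R := by fun_prop
  have hsmall : ∀ᶠ l : ℝ in 𝓝 0, ‖δ (l : ℂ)‖ * R < ρ :=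
    hcont.continuousAt.eventually_lt continuousAt_const (by simpa [hδ0] using hρ)
  filter_upwards [nhdsWithin_le_nhds hsmall] with l hl q hq
  refine (hball _ (mem_ball_zero_iff.2 ?_)).differentiableAt
  exact ((δ l).le_opNorm_of_le (mem_closedBall_zero_iff.1 hq)).trans_lt hl

lemma HasLeadingPart.fderiv_apply {f P : E → ℂ} (h : HasLeadingPart δ f P) (hδ : Continuous δ)
    (hδ0 : δ 0 = 0) (hf : AnalyticAt ℂ f 0) (hP : Differentiable ℂ P) {e : E} {m : ℕ}
    (he : ∀ l, δ l e = l ^ m • e) :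
    HasLeadingPart δ (fun p => fderiv ℂ f p e) (fun p => fderiv ℂ P p e) := by
  obtain ⟨k, hk⟩ := h
  refine ⟨k + m, fun R => Metric.tendstoUniformlyOn_iff.2 fun ε hε => ?_⟩
  filter_upwards [self_mem_nhdsWithin,
    Metric.tendstoUniformlyOn_iff.1 (hk (R + ‖e‖)) (ε / 2) (by positivity),
    eventually_differentiableAt_dilation hδ hδ0 hf (R + ‖e‖)] with l (hl : 0 < l) hclose hdiff q hq
  have hl0 : (l : ℂ) ≠ 0 := Complex.ofReal_ne_zero.2 hl.ne'
  have hball (s : ℂ) (hs : ‖s‖ ≤ 1) : q + s • e ∈ closedBall (0 : E) (R + ‖e‖) := by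
    rw [mem_closedBall_zero_iff] at hq ⊢
    refine (norm_add_le _ _).trans (add_le_add hq ?_)
    rw [norm_smul]
    exact mul_le_of_le_one_left (norm_nonneg e) hs
  have hderiv (x : E) (hx : x ∈ closedBall (0 : E) (R + ‖e‖)) :
      HasFDerivAt (fun x => P x - (l : ℂ) ^ k * f (δ l x))
        (fderiv ℂ P x - (l : ℂ) ^ k • (fderiv ℂ f (δ l x)).comp (δ l)) x :=
    (hP x).hasFDerivAt.sub
      (((hdiff x hx).hasFDerivAt.comp x (δ l).hasFDerivAt).const_mul ((l : ℂ) ^ k))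
  have hbound := norm_fderiv_apply_le (f := fun x => P x - (l : ℂ) ^ k * f (δ l x))
    (q := q) (e := e) (C := ε / 2)
    (fun s hs => (hderiv _ (hball s (by simpa using hs))).differentiableAt)
    (fun s hs => by
      simpa [dist_eq_norm] using (hclose _ (hball s (mem_sphere_zero_iff_norm.1 hs).le)).le)
  rw [(hderiv q (by simpa using hball 0 (by simp))).fderiv] at hbound
  refine lt_of_le_of_lt ?_ (half_lt_self hε)
  simpa [dist_eq_norm, he, zpow_add₀ hl0, mul_assoc] using hbound

lemma eventually_eq_zero_of_hasLeadingPart [ProperSpace E] {κ : Type*} [Finite κ]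
    {f P : κ → E → ℂ} (hδ : Continuous δ) (hδ0 : δ 0 = 0) (hP : ∀ j, Continuous (P j))
    (hlead : ∀ j, HasLeadingPart δ (f j) (P j)) (hzero : ∀ q, (∀ j, P j q = 0) → q = 0) :
    ∀ᶠ p in 𝓝 (0 : E), (∀ j, f j p = 0) → p = 0 := by
  cases nonempty_fintype κ
  obtain ⟨η, hη, hle⟩ := (isCompact_sphere (0 : E) 1).exists_forall_le'
    (f := fun q => ‖fun j => P j q‖) (a := 0) (by fun_prop) fun q hq =>
      norm_pos_iff.2 fun h => ne_of_mem_sphere hq one_ne_zero (hzero q (congrFun h))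
  choose k hk using hlead
  obtain ⟨ε, hε, hclose⟩ := mem_nhdsGT_iff_exists_Ioc_subset.1 (eventually_all.2 fun j =>
    Metric.tendstoUniformlyOn_iff.1 (hk j 1) η hη)
  filter_upwards [eventually_exists_dilation_sphere hδ hδ0 hε] with p hp hfp
  by_contra hp0
  obtain ⟨l, hl, q, hq, rfl⟩ := hp hp0
  refine (hle q hq).not_gt ((pi_norm_lt_iff hη).2 fun j => ?_)
  simpa [hfp j] using hclose hl j q (sphere_subset_closedBall hq)

end Dilations

/-! ### Remainders of large weighted order -/

section Remainder

open Metric Set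

lemma tendsto_ofReal_nhdsGT_zero :
    Tendsto (fun l : ℝ => (l : ℂ)) (𝓝[>] 0) (𝓝[≠] 0) := by
  refine tendsto_nhdsWithin_iff.2 ⟨tendsto_nhdsWithin_of_tendsto_nhds ?_, ?_⟩
  · simpa using Complex.continuous_ofReal.tendsto 0
  · filter_upwards [self_mem_nhdsWithin] with l (hl : 0 < l)
    exact Complex.ofReal_ne_zero.2 hl.ne'

lemma succ_le_analyticOrderAt_of_tendsto {f : ℂ → ℂ} (hf : AnalyticAt ℂ f 0) {d : ℕ}
    (hlim : Tendsto (fun l : ℝ => f l / (l : ℂ) ^ d) (𝓝[>] 0) (𝓝 0)) :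
    ((d + 1 : ℕ) : ℕ∞) ≤ analyticOrderAt f 0 := by
  by_contra! hlt
  obtain ⟨m, hm⟩ := ENat.ne_top_iff_exists.1 hlt.ne_top
  rw [← hm] at hlt
  have hmd : m ≤ d := Nat.lt_succ_iff.1 (by exact_mod_cast hlt)
  obtain ⟨g, hg, hg0, hfg⟩ := hf.analyticOrderAt_eq_natCast.1 hm.symm
  have hzero : Tendsto (fun l : ℝ => (l : ℂ)) (𝓝[>] 0) (𝓝 0) :=
    tendsto_ofReal_nhdsGT_zero.mono_right nhdsWithin_le_nhds
  have hglim : Tendsto (fun l : ℝ => g l) (𝓝[>] 0) (𝓝 0) := by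
    have hprod : Tendsto (fun l : ℝ => f l / (l : ℂ) ^ d * (l : ℂ) ^ (d - m)) (𝓝[>] 0) (𝓝 0) := by
      simpa using hlim.mul (hzero.pow (d - m))
    refine hprod.congr' ?_
    filter_upwards [hzero.eventually hfg, self_mem_nhdsWithin] with l hfl (hl : 0 < l)
    have hl0 : (l : ℂ) ≠ 0 := Complex.ofReal_ne_zero.2 hl.ne'
    rw [hfl, sub_zero, smul_eq_mul, ← Nat.sub_add_cancel hmd, pow_add, Nat.add_sub_cancel]
    field_simp
  exact hg0 (tendsto_nhds_unique (hg.continuousAt.tendsto.comp hzero) hglim)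

lemma analyticAt_iteratedDeriv_left {X : Type*} [NormedAddCommGroup X] [NormedSpace ℂ X]
    {Φ : ℂ × X → ℂ} {x : ℂ × X} (hΦ : AnalyticAt ℂ Φ x) (k : ℕ) :
    AnalyticAt ℂ (fun y => iteratedDeriv k (fun s => Φ (s, y.2)) y.1) x := by
  induction k with
  | zero => simpa using hΦ
  | succ k ih =>
    let apply_one := ContinuousLinearMap.apply ℂ ℂ ((1 : ℂ), (0 : X))
    refine ((apply_one.analyticAt _).comp ih.fderiv).congr ?_
    filter_upwards [ih.eventually_analyticAt] with y hy
    have hline : HasDerivAt (fun s : ℂ => (s, y.2)) ((1 : ℂ), (0 : X)) y.1 :=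
      (hasDerivAt_id y.1).prodMk (hasDerivAt_const y.1 y.2)
    rw [iteratedDeriv_succ]
    exact (hy.differentiableAt.hasFDerivAt.comp_hasDerivAt y.1 hline).deriv.symm

lemma isLittleO_pow_of_succ_le_analyticOrderAt {f : ℂ → ℂ} (hf : AnalyticAt ℂ f 0) {d : ℕ}
    (hord : ((d + 1 : ℕ) : ℕ∞) ≤ analyticOrderAt f 0) : f =o[𝓝 0] fun s : ℂ => ‖s‖ ^ d := by
  obtain ⟨g, hg, hfg⟩ := (natCast_le_analyticOrderAt hf).1 hord
  have hbig : f =O[𝓝 0] fun s : ℂ => s ^ (d + 1) := by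
    refine Asymptotics.IsBigO.congr' ?_ (EventuallyEq.symm hfg) .rfl
    simpa using (Asymptotics.isBigO_refl (fun s : ℂ => s ^ (d + 1)) _).smul
      (hg.continuousAt.isBigO_one ℂ)
  have hlittle := hbig.trans_isLittleO (Asymptotics.isLittleO_pow_pow d.lt_succ_self)
  exact hlittle.norm_right.congr_right fun s => norm_pow s d

lemma exists_norm_le_pow_of_le_analyticOrderAt {X : Type*} [NormedAddCommGroup X]
    [NormedSpace ℂ X] {Φ : ℂ × X → ℂ} {K : Set X} (hK : IsCompact K)
    (hΦ : ∀ q ∈ K, AnalyticAt ℂ Φ (0, q)) {d : ℕ}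
    (hord : ∀ q ∈ K, ((d + 1 : ℕ) : ℕ∞) ≤ analyticOrderAt (fun s => Φ (s, q)) 0) :
    ∃ C r : ℝ, 0 < r ∧ ∀ s ∈ ball (0 : ℂ) r, ∀ q ∈ K, ‖Φ (s, q)‖ ≤ C * ‖s‖ ^ (d + 1) := by
  obtain ⟨u, v, huo, -, h0u, hKv, huv⟩ := generalized_tube_lemma
    (isCompact_singleton (x := (0 : ℂ))) hK (isOpen_analyticAt ℂ Φ)
    (by rintro ⟨s, q⟩ ⟨rfl, hq⟩; exact hΦ q hq)
  obtain ⟨r, hr, hru⟩ := nhds_basis_closedBall.mem_iff.1 (huo.mem_nhds (h0u rfl))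
  have han (s : ℂ) (hs : s ∈ closedBall 0 r) (q : X) (hq : q ∈ K) : AnalyticAt ℂ Φ (s, q) :=
    huv ⟨hru hs, hKv hq⟩
  obtain ⟨M, hM⟩ := ((isCompact_closedBall (0 : ℂ) r).prod hK).exists_bound_of_continuousOn
    (f := Φ) fun x hx => (han _ hx.1 _ hx.2).continuousAt.continuousWithinAt
  refine ⟨M / r ^ (d + 1), r, hr, fun s hs q hq => ?_⟩
  have hfst := (han 0 (by simp [hr.le]) q hq).along_fst
  have hΦ0 : Φ (0, q) = 0 :=
    apply_eq_zero_of_analyticOrderAt_ne_zero (f := fun s => Φ (s, q))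
      (Order.one_le_iff_ne_zero.1 (le_trans (by simp) (hord q hq)))
  have hlittle : (fun s => Φ (s, q) - Φ (0, q)) =o[𝓝 0] fun s : ℂ => ‖s - 0‖ ^ d := by
    simpa [hΦ0] using isLittleO_pow_of_succ_le_analyticOrderAt hfst (hord q hq)
  have hschwarz := Complex.dist_le_mul_div_pow_of_mapsTo_ball_of_isLittleO
    (f := fun s => Φ (s, q)) (R₁ := r) (R₂ := M)
    (fun z hz => (han z (ball_subset_closedBall hz) q hq).along_fst.differentiableWithinAt)
    (fun z hz => by simpa [hΦ0] using hM (z, q) ⟨ball_subset_closedBall hz, hq⟩) hlittle hs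
  simpa [hΦ0, div_pow, mul_div_assoc, div_mul_eq_mul_div] using hschwarz

lemma analyticAt_comp_dilation {E : Type*} [NormedAddCommGroup E] [NormedSpace ℂ E]
    {δ : ℂ →* (E →L[ℂ] E)} (hδ : ContDiff ℂ ⊤ δ) (hδ0 : δ 0 = 0) {h : E → ℂ}
    (hh : AnalyticAt ℂ h 0) (q : E) :
    AnalyticAt ℂ (fun x : ℂ × E => h (δ x.1 x.2)) (0, q) := by
  have hdil : ContDiff ℂ ⊤ fun x : ℂ × E => δ x.1 x.2 :=
    (hδ.comp contDiff_fst).clm_apply contDiff_snd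
  refine AnalyticAt.fun_comp (g := h) ?_ hdil.contDiffAt.analyticAt
  simpa [hδ0] using hh

lemma apply_I_eq_zero_of_apply_ofReal_eq_zero {f : ℂ → ℂ} (hf : AnalyticOnNhd ℂ f univ)
    (hreal : ∀ᶠ s : ℝ in 𝓝 0, f s = 0) : f Complex.I = 0 := by
  have hfreq : ∃ᶠ s in 𝓝[≠] (0 : ℂ), f s = 0 :=
    tendsto_ofReal_nhdsGT_zero.frequently (hreal.filter_mono nhdsWithin_le_nhds).frequently
  exact congrFun (hf.eq_of_frequently_eq analyticOnNhd_const hfreq) Complex.I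

section TotallyReal

variable {V : Type*} [NormedAddCommGroup V] [NormedSpace ℂ V] [StarAddMonoid V] [StarModule ℂ V]
  [NormedStarGroup V]

lemma eq_zero_of_eventually_apply_star_eq_zero {c : V × V → ℂ} (hc : AnalyticOnNhd ℂ c univ)
    (hstar : ∀ᶠ z in 𝓝 (0 : V), c (z, star z) = 0) : c = 0 := by
  obtain ⟨r, hr, hball⟩ := Metric.eventually_nhds_iff_ball.1 hstar
  refine hc.eq_of_eventuallyEq (z₀ := 0) analyticOnNhd_const ?_
  filter_upwards [ball_mem_nhds 0 hr] with ⟨z, w⟩ hzw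
  rw [mem_ball_zero_iff, Prod.norm_def, max_lt_iff] at hzw
  -- `(z, w)` lies on the complexification of the real line `s ↦ (u + s v, star (u + s v))`.
  let u : V := (2⁻¹ : ℂ) • (z + star w)
  let v : V := (-Complex.I * 2⁻¹) • (z - star w)
  let γ : ℂ → V × V := fun s => (u + s • v, star u + s • star v)
  have hγI : γ Complex.I = (z, w) := by
    have hv : Complex.I * (-Complex.I * 2⁻¹) = 2⁻¹ := by simp [← mul_assoc]
    have hstarv : Complex.I * star (-Complex.I * 2⁻¹ : ℂ) = -2⁻¹ := by simp [← mul_assoc]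
    have hstaru : star (2⁻¹ : ℂ) = 2⁻¹ := by simp
    simp only [γ, u, v, star_smul, star_add, star_sub, star_star, smul_smul, hv, hstarv, hstaru]
    exact Prod.ext (by module) (by module)
  have hγ : AnalyticOnNhd ℂ γ univ := fun s _ =>
    (show ContDiff ℂ ⊤ γ by fun_prop).contDiffAt.analyticAt
  have hu : ‖u‖ < r := by
    have htri := norm_add_le z (star w)
    rw [norm_star] at htri
    rw [norm_smul, norm_inv, Complex.norm_ofNat]
    linarith
  have hγreal : ∀ᶠ s : ℝ in 𝓝 0, c (γ s) = 0 := by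
    have hcont : Continuous fun s : ℝ => ‖u + (s : ℂ) • v‖ := by fun_prop
    filter_upwards [hcont.continuousAt.eventually_lt continuousAt_const (by simpa using hu)]
      with s hs
    simpa [γ, star_smul] using hball (u + (s : ℂ) • v) (mem_ball_zero_iff.2 hs)
  rw [← hγI]
  exact apply_I_eq_zero_of_apply_ofReal_eq_zero (f := fun s => c (γ s))
    (fun s hs => AnalyticAt.fun_comp (hc _ (mem_univ _)) (hγ s hs)) hγreal

variable {δ : ℂ →* (V × V →L[ℂ] V × V)} {h f P : V × V → ℂ} {d : ℕ}

lemma succ_le_analyticOrderAt_comp_dilation (hδ : ContDiff ℂ ⊤ δ) (hδ0 : δ 0 = 0)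
    (hh : AnalyticAt ℂ h 0)
    (hord : ∀ᶠ z in 𝓝 (0 : V),
      Tendsto (fun l : ℝ => h (δ l (z, star z)) / (l : ℂ) ^ d) (𝓝[>] 0) (𝓝 0)) (q : V × V) :
    ((d + 1 : ℕ) : ℕ∞) ≤ analyticOrderAt (fun s : ℂ => h (δ s q)) 0 := by
  have han := analyticAt_comp_dilation hδ hδ0 hh
  refine (natCast_le_analyticOrderAt_iff_iteratedDeriv_eq_zero (han q).along_fst).2 fun k hk => ?_
  have hcoeff : AnalyticOnNhd ℂ
      (fun q : V × V => iteratedDeriv k (fun s => h (δ s q)) 0) univ := fun q _ =>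
    AnalyticAt.along_snd (analyticAt_iteratedDeriv_left (han q) k)
  refine congrFun (eq_zero_of_eventually_apply_star_eq_zero hcoeff ?_) q
  filter_upwards [hord] with z hz
  exact (natCast_le_analyticOrderAt_iff_iteratedDeriv_eq_zero (han _).along_fst).1
    (succ_le_analyticOrderAt_of_tendsto (han _).along_fst hz) k hk

lemma hasLeadingPart_of_tendsto_sub [ProperSpace V] (hδ : ContDiff ℂ ⊤ δ) (hδ0 : δ 0 = 0)
    (hf : AnalyticAt ℂ f 0) (hP : AnalyticAt ℂ P 0) (hPδ : ∀ l q, P (δ l q) = l ^ d * P q)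
    (hord : ∀ᶠ z in 𝓝 (0 : V), Tendsto
      (fun l : ℝ => (f (δ l (z, star z)) - P (δ l (z, star z))) / (l : ℂ) ^ d) (𝓝[>] 0) (𝓝 0)) :
    HasLeadingPart δ f P := by
  refine ⟨-d, fun R => Metric.tendstoUniformlyOn_iff.2 fun ε hε => ?_⟩
  have hfP : AnalyticAt ℂ (fun q => f q - P q) 0 := hf.sub hP
  obtain ⟨C, r, hr, hC⟩ := exists_norm_le_pow_of_le_analyticOrderAt
    (isCompact_closedBall (0 : V × V) R) (fun q _ => analyticAt_comp_dilation hδ hδ0 hfP q)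
    (fun q _ => succ_le_analyticOrderAt_comp_dilation hδ hδ0 hfP hord q)
  have hcont : Continuous fun l : ℝ => C * l := by fun_prop
  filter_upwards [self_mem_nhdsWithin, nhdsWithin_le_nhds (ball_mem_nhds 0 hr),
    nhdsWithin_le_nhds (hcont.continuousAt.eventually_lt continuousAt_const (by simpa using hε))]
    with l (hl : 0 < l) hlr hlε q hq
  have hl0 : (l : ℂ) ≠ 0 := Complex.ofReal_ne_zero.2 hl.ne'
  refine lt_of_le_of_lt ?_ hlε
  have hbound := hC l (by simpa using hlr) q hq
  rw [hPδ, Complex.norm_real, Real.norm_of_nonneg hl.le] at hbound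
  calc dist (P q) ((l : ℂ) ^ (-d : ℤ) * f (δ l q))
      = ‖f (δ l q) - l ^ d * P q‖ / l ^ d := by
        have hfactor : (l : ℂ) ^ (-d : ℤ) * f (δ l q) - P q
            = (f (δ l q) - l ^ d * P q) / l ^ d := by
          rw [zpow_neg, zpow_natCast]
          field_simp
        rw [dist_comm, dist_eq_norm, hfactor, norm_div, norm_pow, Complex.norm_real,
          Real.norm_of_nonneg hl.le]
    _ ≤ C * l ^ (d + 1) / l ^ d := by gcongr
    _ = C * l := by rw [pow_succ']; field_simp

end TotallyReal

end Remainder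

/-! ### Critical points and leading parts -/

section Critical

variable {E : Type*} [NormedAddCommGroup E] [NormedSpace ℂ E] {δ : ℂ →* (E →L[ℂ] E)}
  {f P t : E → ℂ} {κ : Type*}

lemma fderiv_dilation_apply {D : ℕ} (hf : Differentiable ℂ f)
    (hfδ : ∀ l q, f (δ l q) = l ^ D * f q) (l : ℂ) (q e : E) :
    fderiv ℂ f (δ l q) (δ l e) = l ^ D * fderiv ℂ f q e := by
  have hcomp : HasFDerivAt (fun q => f (δ l q)) ((fderiv ℂ f (δ l q)).comp (δ l)) q :=
    (hf (δ l q)).hasFDerivAt.comp q (δ l).hasFDerivAt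
  simp only [hfδ] at hcomp
  exact DFunLike.congr_fun (hcomp.unique ((hf q).hasFDerivAt.const_mul (l ^ D))) e

lemma eq_zero_of_fderiv_eq_zero_of_eventually {D : ℕ} (hδ : Continuous δ) (hδ0 : δ 0 = 0)
    (hf : Differentiable ℂ f) (hfδ : ∀ l q, f (δ l q) = l ^ D * f q)
    (hiso : ∀ᶠ q in 𝓝 0, fderiv ℂ f q = 0 → q = 0) {q : E} (hq : fderiv ℂ f q = 0) : q = 0 := by
  have hcont : Continuous fun l => δ l q := by fun_prop
  have hlim : Tendsto (fun l => δ l q) (𝓝[≠] 0) (𝓝 0) :=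
    tendsto_nhdsWithin_of_tendsto_nhds (by simpa [hδ0] using hcont.tendsto 0)
  obtain ⟨l, hl, (hl0 : l ≠ 0)⟩ := ((hlim.eventually hiso).and eventually_mem_nhdsWithin).exists
  have hcrit : fderiv ℂ f (δ l q) = 0 := by
    ext e
    have hcancel : δ l (δ l⁻¹ e) = e := by
      simpa using dilation_inv_apply (δ := δ) (inv_ne_zero hl0) e
    simpa [hq, hcancel] using fderiv_dilation_apply hf hfδ l q (δ l⁻¹ e)
  rw [← dilation_inv_apply (δ := δ) hl0 q, hl hcrit, map_zero]

lemma HasLeadingPart.eventually_eq_zero_of_fderiv_eq_zero [Finite κ]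
    (h : HasLeadingPart δ f P) (hδ : Continuous δ) (hδ0 : δ 0 = 0) (hf : AnalyticAt ℂ f 0)
    (hP : ContDiff ℂ 1 P) (e : Module.Basis κ ℂ E) {m : κ → ℕ}
    (he : ∀ i l, δ l (e i) = l ^ m i • e i) (hcrit : ∀ q, fderiv ℂ P q = 0 → q = 0) :
    ∀ᶠ p in 𝓝 0, fderiv ℂ f p = 0 → p = 0 := by
  have : FiniteDimensional ℂ E := e.finiteDimensional_of_finite
  have : ProperSpace E := FiniteDimensional.proper ℂ E
  have hiso := eventually_eq_zero_of_hasLeadingPart hδ hδ0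
    (f := fun i p => fderiv ℂ f p (e i)) (P := fun i p => fderiv ℂ P p (e i))
    (fun i => (hP.continuous_fderiv one_ne_zero).clm_apply continuous_const)
    (fun i => h.fderiv_apply hδ hδ0 hf (hP.differentiable one_ne_zero) (he i))
    (fun q hq => hcrit q (ContinuousLinearMap.coe_injective (e.ext hq)))
  filter_upwards [hiso] with p hp hfp
  exact hp fun i => by simp [hfp]

/-- The values of `f` and of its derivatives along the directions `e i`. -/
noncomputable def valueAndDerivs (f : E → ℂ) (e : κ → E) : Option κ → E → ℂ
  | none => f
  | some i => fun p => fderiv ℂ f p (e i)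

lemma HasLeadingPart.hasLocalDimH_zeros_valueAndDerivs [Fintype κ] [FiniteDimensional ℂ E]
    (h : HasLeadingPart δ f P) (hδ : Continuous δ) (hδ0 : δ 0 = 0) (hf : AnalyticAt ℂ f 0)
    (hf0 : f 0 = 0) (hdf0 : fderiv ℂ f 0 = 0) (hP : ContDiff ℂ 1 P)
    (hκ : Fintype.card κ + 2 = Module.finrank ℂ E) {e : κ → E} {m : κ → ℕ}
    (he : ∀ i l, δ l (e i) = l ^ m i • e i)
    (ht : ContDiff ℂ ⊤ t) (ht0 : t 0 = 0) {D : ℕ} (htδ : ∀ l q, t (δ l q) = l ^ D * t q)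
    (hzero : ∀ q, P q = 0 → (∀ i, fderiv ℂ P q (e i) = 0) → t q = 0 → q = 0) :
    HasLocalDimH {p | f p = 0 ∧ ∀ i, fderiv ℂ f p (e i) = 0} 0 2 := by
  have : ProperSpace E := FiniteDimensional.proper ℂ E
  let system (F : E → ℂ) : Option (Option κ) → E → ℂ := fun j => j.elim t (valueAndDerivs F e)
  have hPderiv (v : E) : Continuous fun p => fderiv ℂ P p v :=
    (hP.continuous_fderiv one_ne_zero).clm_apply continuous_const
  have hiso : ∀ᶠ p in 𝓝 (0 : E), (∀ j, system f j p = 0) → p = 0 := by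
    refine eventually_eq_zero_of_hasLeadingPart (P := system P) hδ hδ0 ?_ ?_ fun q hq =>
      hzero q (hq (some none)) (fun i => hq (some (some i))) (hq none)
    · rintro (_ | _ | i)
      exacts [ht.continuous, hP.continuous, hPderiv (e i)]
    · rintro (_ | _ | i)
      exacts [hasLeadingPart_self htδ, h,
        h.fderiv_apply hδ hδ0 hf (hP.differentiable one_ne_zero) (he i)]
  have hset : {p | f p = 0 ∧ ∀ i, fderiv ℂ f p (e i) = 0}
      = {p | ∀ j, valueAndDerivs f e j p = 0} := by
    ext p
    exact (Option.forall (p := fun j => valueAndDerivs f e j p = 0)).symm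
  rw [hset]
  refine hasLocalDimH_zeros_of_isolated (t := t) ?_ ?_ ht.contDiffAt.analyticAt ?_ ht0 ?_
  · rw [Fintype.card_option, ← hκ]
  · rintro (_ | i)
    exacts [hf, ((ContinuousLinearMap.apply ℂ ℂ (e i)).analyticAt _).comp hf.fderiv]
  · rintro (_ | i)
    exacts [hf0, by simp [valueAndDerivs, hdf0]]
  · filter_upwards [hiso] with p hp hfp htp
    exact hp (Option.forall.2 ⟨htp, hfp⟩)

end Critical

/-! ### Weighted dilations and weighted homogeneous polynomials -/

section Weighted

open MvPolynomial

variable {ι : Type*} (w : ι → ℕ)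

/-- The dilations `z ↦ (l ^ w i * z i)ᵢ` with weights `w`. -/
noncomputable def weightedDilation : ℂ →* ((ι → ℂ) →L[ℂ] (ι → ℂ)) where
  toFun l := ContinuousLinearMap.pi fun i => l ^ w i • ContinuousLinearMap.proj i
  map_one' := by ext; simp
  map_mul' l l' := by ext; simp [mul_pow, mul_assoc]

/-- The weighted dilations acting on both copies of the coordinate space in the product where
complexifications live. -/
noncomputable def pairDilation :
    ℂ →* (((ι → ℂ) × (ι → ℂ)) →L[ℂ] ((ι → ℂ) × (ι → ℂ))) where
  toFun l := (weightedDilation w l).prodMap (weightedDilation w l)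
  map_one' := by ext <;> simp
  map_mul' l l' := by ext <;> simp

@[simp]
lemma weightedDilation_apply (l : ℂ) (z : ι → ℂ) (i : ι) :
    weightedDilation w l z i = l ^ w i * z i := rfl

@[simp]
lemma pairDilation_apply (l : ℂ) (p : (ι → ℂ) × (ι → ℂ)) :
    pairDilation w l p = (weightedDilation w l p.1, weightedDilation w l p.2) := rfl

lemma contDiff_weightedDilation [Fintype ι] : ContDiff ℂ ⊤ (weightedDilation w) := by
  refine contDiff_clm_apply_iff.2 fun z => contDiff_pi.2 fun i => ?_
  simp only [weightedDilation_apply]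
  fun_prop

lemma contDiff_pairDilation [Fintype ι] : ContDiff ℂ ⊤ (pairDilation w) :=
  contDiff_clm_apply_iff.2 fun _ =>
    ((contDiff_weightedDilation w).clm_apply contDiff_const).prodMk
      ((contDiff_weightedDilation w).clm_apply contDiff_const)

variable {w}

lemma weightedDilation_zero (hw : ∀ i, w i ≠ 0) : weightedDilation w 0 = 0 := by
  ext z i
  simp [hw]

lemma pairDilation_zero (hw : ∀ i, w i ≠ 0) : pairDilation w 0 = 0 := by
  refine ContinuousLinearMap.ext fun p => ?_
  simp [weightedDilation_zero hw]

lemma weightedDilation_ofReal_star (l : ℝ) (z : ι → ℂ) :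
    weightedDilation w l (star z) = star (weightedDilation w l z) := by
  ext i
  simp

lemma weightedDilation_single [DecidableEq ι] (l : ℂ) (i : ι) :
    weightedDilation w l (Pi.single i 1) = l ^ w i • Pi.single i 1 := by
  ext j
  obtain rfl | h := eq_or_ne j i <;> simp [*]

lemma pairDilation_inl [DecidableEq ι] (l : ℂ) (i : ι) :
    pairDilation w l (Pi.single i 1, 0) = l ^ w i • (Pi.single i 1, 0) := by
  simp [weightedDilation_single]

lemma pairDilation_inr [DecidableEq ι] (l : ℂ) (i : ι) :
    pairDilation w l (0, Pi.single i 1) = l ^ w i • (0, Pi.single i 1) := by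
  simp [weightedDilation_single]

lemma hasFDerivAt_eval [Fintype ι] (Q : MvPolynomial ι ℂ) (z : ι → ℂ) :
    HasFDerivAt (fun z => eval z Q)
      (∑ i, eval z (pderiv i Q) • ContinuousLinearMap.proj (R := ℂ) (φ := fun _ : ι => ℂ) i) z := by
  classical
  induction Q using MvPolynomial.induction_on with
  | C c =>
    simp only [eval_C]
    refine (hasFDerivAt_const (𝕜 := ℂ) c z).congr_fderiv ?_
    ext v
    simp
  | add p q hp hq =>
    simp only [map_add]
    refine (hp.fun_add hq).congr_fderiv ?_
    ext v
    simp [add_mul, Finset.sum_add_distrib]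
  | mul_X p n hp =>
    simp only [map_mul, eval_X]
    refine (hp.fun_mul (hasFDerivAt_apply n z)).congr_fderiv ?_
    ext v
    simp [pderiv_X, Pi.single_apply, add_mul, Finset.sum_add_distrib, Finset.mul_sum, mul_assoc,
      apply_ite (eval z)]

lemma fderiv_eval_single [Finite ι] [DecidableEq ι] (Q : MvPolynomial ι ℂ) (z : ι → ℂ) (i : ι) :
    fderiv ℂ (fun z => eval z Q) z (Pi.single i 1) = eval z (pderiv i Q) := by
  cases nonempty_fintype ι
  simp [(hasFDerivAt_eval Q z).fderiv, Pi.single_apply]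

lemma fderiv_eval_eq_zero_iff [Finite ι] (Q : MvPolynomial ι ℂ) (z : ι → ℂ) :
    fderiv ℂ (fun z => eval z Q) z = 0 ↔ ∀ i, eval z (pderiv i Q) = 0 := by
  classical
  cases nonempty_fintype ι
  refine ⟨fun h i => by rw [← fderiv_eval_single, h, zero_apply], fun h => ?_⟩
  rw [(hasFDerivAt_eval Q z).fderiv]
  ext v
  simp [h]

lemma contDiff_eval [Fintype ι] (Q : MvPolynomial ι ℂ) : ContDiff ℂ ⊤ fun z => eval z Q :=
  contDiff_iff_contDiffAt.2 fun z =>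
    (AnalyticOnNhd.eval_mvPolynomial (𝕜 := ℂ) Q z (Set.mem_univ z)).contDiffAt

variable {d : ℕ} {Q : MvPolynomial ι ℂ}

lemma eval_weightedDilation (hQ : IsWeightedHomogeneous w Q d) (l : ℂ) (z : ι → ℂ) :
    eval (weightedDilation w l z) Q = l ^ d * eval z Q := by
  rw [eval_eq, eval_eq, Finset.mul_sum]
  refine Finset.sum_congr rfl fun m hm => ?_
  rw [← hQ (mem_support_iff.1 hm), Finsupp.weight_apply, Finsupp.sum]
  simp only [weightedDilation_apply, mul_pow, Finset.prod_mul_distrib, ← pow_mul,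
    Finset.prod_pow_eq_pow_sum, smul_eq_mul, mul_comm (w _)]
  ring

lemma eval_zero_of_isWeightedHomogeneous (hQ : IsWeightedHomogeneous w Q d)
    (hw : ∀ i, w i ≠ 0) (hd : d ≠ 0) : eval 0 Q = 0 := by
  simpa [weightedDilation_zero hw, hd] using eval_weightedDilation hQ 0 0

lemma eq_zero_of_eval_pderiv_eq_zero [Finite ι] (hw : ∀ i, w i ≠ 0)
    (hQ : IsWeightedHomogeneous w Q d)
    (hiso : ∀ᶠ z in 𝓝 (0 : ι → ℂ), (∀ i, eval z (pderiv i Q) = 0) → z = 0)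
    {z : ι → ℂ} (hz : ∀ i, eval z (pderiv i Q) = 0) : z = 0 := by
  cases nonempty_fintype ι
  simp only [← fderiv_eval_eq_zero_iff] at hiso hz
  exact eq_zero_of_fderiv_eq_zero_of_eventually (contDiff_weightedDilation w).continuous
    (weightedDilation_zero hw) ((contDiff_eval Q).differentiable (by simp))
    (eval_weightedDilation hQ) hiso hz

lemma eval_map_conj (Q : MvPolynomial ι ℂ) (z : ι → ℂ) :
    eval z (map (starRingEnd ℂ) Q) = star (eval (star z) Q) := by
  have hz : (starRingEnd ℂ : ℂ → ℂ) ∘ star z = z := by ext; simp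
  rw [eval_map, ← starRingEnd_apply, ← eval₂_id, eval₂_comp_left (starRingEnd ℂ), hz,
    RingHom.comp_id]

lemma eq_zero_of_eval_pderiv_map_conj_eq_zero
    (hQ : ∀ z : ι → ℂ, (∀ i, eval z (pderiv i Q) = 0) → z = 0) {z : ι → ℂ}
    (hz : ∀ i, eval z (pderiv i (map (starRingEnd ℂ) Q)) = 0) : z = 0 := by
  simp only [pderiv_map, eval_map_conj, star_eq_zero] at hz
  exact star_eq_zero.1 (hQ _ hz)

lemma isWeightedHomogeneous_map_conj (hQ : IsWeightedHomogeneous w Q d) :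
    IsWeightedHomogeneous w (map (starRingEnd ℂ) Q) d := fun m hm =>
  hQ fun h => hm (by rw [coeff_map, h, map_zero])

end Weighted

lemma isWeightedHomogeneous_of_forall_mem_support {R : Type*} [CommSemiring R] {w : Fin 2 → ℕ}
    {d : ℕ} {Q : MvPolynomial (Fin 2) R} (hQ : ∀ m ∈ Q.support, w 0 * m 0 + w 1 * m 1 = d) :
    MvPolynomial.IsWeightedHomogeneous w Q d := fun m hm => by
  rw [← hQ m (MvPolynomial.mem_support_iff.2 hm), Finsupp.weight_apply,
    Finsupp.sum_fintype _ _ (by simp)]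
  simp [mul_comm]

section TransverseCurve

open MvPolynomial

variable {w : Fin 2 → ℕ} {d : ℕ} {Q : MvPolynomial (Fin 2) ℂ}

lemma exists_eq_weightedDilation_one (hw : w 0 ≠ 0) {z : Fin 2 → ℂ} (hz : z 0 ≠ 0) :
    ∃ l u : ℂ, l ≠ 0 ∧ z = weightedDilation w l ![1, u] := by
  obtain ⟨l, hl⟩ := IsAlgClosed.exists_pow_nat_eq (z 0) (Nat.pos_of_ne_zero hw)
  have hl0 : l ≠ 0 := by
    rintro rfl
    exact hz (hl.symm.trans (zero_pow hw))
  refine ⟨l, z 1 / l ^ w 1, hl0, ?_⟩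
  ext i
  fin_cases i <;> simp [hl, mul_div_cancel₀, hl0]

lemma exists_eval_one_ne_zero (hw : w 0 ≠ 0) (hQ : IsWeightedHomogeneous w Q d) (hQ0 : Q ≠ 0) :
    ∃ u : ℂ, eval ![1, u] Q ≠ 0 := by
  by_contra! hvanish
  refine mul_ne_zero hQ0 (X_ne_zero (0 : Fin 2)) (MvPolynomial.funext fun z => ?_)
  obtain hz | hz := eq_or_ne (z 0) 0
  · simp [hz]
  · obtain ⟨l, u, -, rfl⟩ := exists_eq_weightedDilation_one hw hz
    simp [eval_weightedDilation hQ, hvanish]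

lemma finite_setOf_eval_one_eq_zero (hw : w 0 ≠ 0) (hQ : IsWeightedHomogeneous w Q d)
    (hQ0 : Q ≠ 0) : {u : ℂ | eval ![1, u] Q = 0}.Finite := by
  let p : Polynomial ℂ := aeval ![1, Polynomial.X] Q
  have heval (u : ℂ) : p.eval u = eval ![1, u] Q := by
    have hu : (fun i => Polynomial.aeval u ((![1, .X] : Fin 2 → Polynomial ℂ) i)) = ![1, u] := by
      ext i
      fin_cases i <;> simp
    rw [← Polynomial.coe_aeval_eq_eval, ← aeval_eq_eval, ← hu, ← comp_aeval]
    rfl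
  obtain ⟨u, hu⟩ := exists_eval_one_ne_zero hw hQ hQ0
  have hp : p ≠ 0 := fun h => hu (by rw [← heval, h, Polynomial.eval_zero])
  simp only [← heval]
  exact Polynomial.finite_setOfPred_isRoot hp

lemma exists_weighted_curve_inter_zeros_eq_zero (hw : ∀ i, w i ≠ 0)
    (hQ : IsWeightedHomogeneous w Q d) (hQ0 : Q ≠ 0) :
    ∃ v : ℂ, ∀ z : Fin 2 → ℂ, eval z Q = 0 → z 1 ^ w 0 - v * z 0 ^ w 1 = 0 → z = 0 := by
  obtain ⟨v, hv⟩ := ((finite_setOf_eval_one_eq_zero (hw 0) hQ hQ0).image (· ^ w 0)).exists_notMem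
  refine ⟨v, fun z hz hzv => ?_⟩
  obtain hz0 | hz0 := eq_or_ne (z 0) 0
  · have hz1 : z 1 = 0 := by simpa [hz0, hw] using hzv
    ext i
    fin_cases i
    exacts [hz0, hz1]
  obtain ⟨l, u, hl, rfl⟩ := exists_eq_weightedDilation_one (hw 0) hz0
  have hu : eval ![1, u] Q = 0 := by simpa [eval_weightedDilation hQ, hl] using hz
  refine absurd ⟨u, hu, mul_left_cancel₀ (pow_ne_zero (w 0 * w 1) hl) ?_⟩ hv
  simp only [weightedDilation_apply, Matrix.cons_val_zero, Matrix.cons_val_one, mul_pow, mul_one,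
    ← pow_mul] at hzv
  linear_combination hzv + u ^ w 0 * (by ring : l ^ (w 0 * w 1) = l ^ (w 1 * w 0))

end TransverseCurve

/-! ### Complexification and the singular set of the Levi foliation -/

lemma forall_apply_eq_zero_imp_apply_inl_iff {K V W : Type*} [CommRing K] [NoZeroDivisors K]
    [AddCommGroup V] [AddCommGroup W] [Module K V] [Module K W] (A : V × W →ₗ[K] K) :
    (∀ v, A v = 0 → A (v.1, 0) = 0) ↔ (∀ x, A (x, 0) = 0) ∨ ∀ y, A (0, y) = 0 := by
  have hsplit (x : V) (y : W) : A (x, y) = A (x, 0) + A (0, y) := by simp [← map_add]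
  constructor
  · intro h
    by_contra! hne
    obtain ⟨⟨x, hx⟩, y, hy⟩ := hne
    have hsmul₁ : A (A (0, y) • x, 0) = A (0, y) * A (x, 0) := by
      simp [← smul_eq_mul, ← map_smul]
    have hsmul₂ : A (0, A (x, 0) • -y) = -(A (x, 0) * A (0, y)) := by
      simp [← smul_eq_mul, ← map_smul, ← map_neg]
    refine mul_ne_zero hy hx (hsmul₁.symm.trans (h (A (0, y) • x, A (x, 0) • -y) ?_))
    rw [hsplit, hsmul₁, hsmul₂]
    ring
  · rintro (h | h) v hv
    · exact h v.1
    · simpa [hsplit v.1 v.2, h] using hv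

lemma forall_apply_eq_zero_iff_single {K ι : Type*} [CommRing K] [Finite ι] [DecidableEq ι]
    (B : (ι → K) →ₗ[K] K) : (∀ x, B x = 0) ↔ ∀ i, B (Pi.single i 1) = 0 := by
  refine ⟨fun h i => h _, fun h => LinearMap.congr_fun (g := 0) ?_⟩
  exact (Pi.basisFun K ι).ext fun i => by simpa using h i

lemma mem_singLC_iff {n : ℕ} {f : (Fin n → ℂ) × (Fin n → ℂ) → ℂ}
    {p : (Fin n → ℂ) × (Fin n → ℂ)} :
    p ∈ singLC f ↔ f p = 0 ∧ fderiv ℂ f p ≠ 0 ∧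
      ((∀ i, fderiv ℂ f p (Pi.single i 1, 0) = 0) ∨
        ∀ i, fderiv ℂ f p (0, Pi.single i 1) = 0) := by
  let A : (Fin n → ℂ) × (Fin n → ℂ) →ₗ[ℂ] ℂ := fderiv ℂ f p
  refine and_congr_right' (and_congr_right' ?_)
  exact (forall_apply_eq_zero_imp_apply_inl_iff A).trans <| or_congr
    (forall_apply_eq_zero_iff_single (A ∘ₗ LinearMap.inl ℂ _ _))
    (forall_apply_eq_zero_iff_single (A ∘ₗ LinearMap.inr ℂ _ _))

lemma fderiv_eq_zero_of_apply_star_eq_ofReal {V : Type*} [NormedAddCommGroup V] [NormedSpace ℂ V]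
    [StarAddMonoid V] [StarModule ℂ V] [NormedStarGroup V] {f : V × V → ℂ} {F : V → ℝ}
    (hf : DifferentiableAt ℂ f 0) (hfF : ∀ᶠ z in 𝓝 (0 : V), f (z, star z) = F z)
    (hF : fderiv ℝ F 0 = 0) : fderiv ℂ f 0 = 0 := by
  let graph : V →L[ℝ] V × V := (ContinuousLinearMap.id ℝ V).prod (starL' ℝ : V ≃L[ℝ] V)
  have hf' : HasFDerivAt f ((fderiv ℂ f 0).restrictScalars ℝ) (graph 0) := by
    simpa using hf.hasFDerivAt.restrictScalars ℝ
  have hFf : HasFDerivAt (fun z => (F z : ℂ)) (((fderiv ℂ f 0).restrictScalars ℝ).comp graph) 0 :=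
    (hf'.comp 0 graph.hasFDerivAt).congr_of_eventuallyEq (hfF.mono fun z hz => hz.symm)
  have hdiff : DifferentiableAt ℝ F 0 :=
    (Complex.reCLM.hasFDerivAt.comp 0 hFf).differentiableAt
  have hF0 := Complex.ofRealCLM.hasFDerivAt.comp 0 hdiff.hasFDerivAt
  have hgraph (z : V) : fderiv ℂ f 0 (z, star z) = 0 := by
    rw [hF, ContinuousLinearMap.comp_zero] at hF0
    exact DFunLike.congr_fun (hFf.unique hF0) z
  exact DFunLike.coe_injective (eq_zero_of_eventually_apply_star_eq_zero
    (fun q _ => (fderiv ℂ f 0).analyticAt q) (Eventually.of_forall hgraph))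

section ComplexifiedRe

open MvPolynomial

variable {ι : Type*} (Q : MvPolynomial ι ℂ)

/-- The complexification `(Q(z) + Q̄(w)) / 2` of the function `z ↦ Re Q(z)`. -/
noncomputable def complexifiedRe (p : (ι → ℂ) × (ι → ℂ)) : ℂ :=
  (eval p.1 Q + eval p.2 (map (starRingEnd ℂ) Q)) / 2

lemma complexifiedRe_star (z : ι → ℂ) : complexifiedRe Q (z, star z) = ((eval z Q).re : ℂ) := by
  rw [complexifiedRe, eval_map_conj, star_star, Complex.re_eq_add_conj, Complex.star_def]

lemma contDiff_complexifiedRe [Fintype ι] : ContDiff ℂ ⊤ (complexifiedRe Q) :=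
  (((contDiff_eval Q).comp contDiff_fst).add
    ((contDiff_eval (map (starRingEnd ℂ) Q)).comp contDiff_snd)).div_const 2

lemma fderiv_complexifiedRe_apply [Finite ι] (p v : (ι → ℂ) × (ι → ℂ)) :
    fderiv ℂ (complexifiedRe Q) p v = (fderiv ℂ (fun z => eval z Q) p.1 v.1 +
      fderiv ℂ (fun z => eval z (map (starRingEnd ℂ) Q)) p.2 v.2) / 2 := by
  cases nonempty_fintype ι
  have hdiff (R : MvPolynomial ι ℂ) : Differentiable ℂ fun z => eval z R :=
    (contDiff_eval R).differentiable (by simp)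
  have hderiv := (((hdiff Q p.1).hasFDerivAt.comp p hasFDerivAt_fst).add
    ((hdiff (map (starRingEnd ℂ) Q) p.2).hasFDerivAt.comp p hasFDerivAt_snd)).mul_const (2 : ℂ)⁻¹
  rw [(hderiv.congr_of_eventuallyEq (f₁ := complexifiedRe Q) (.of_forall fun _ => rfl)).fderiv]
  simp [div_eq_inv_mul, mul_add]

variable {Q}

lemma complexifiedRe_pairDilation {w : ι → ℕ} {d : ℕ} (hQ : IsWeightedHomogeneous w Q d) (l : ℂ)
    (p : (ι → ℂ) × (ι → ℂ)) :
    complexifiedRe Q (pairDilation w l p) = l ^ d * complexifiedRe Q p := by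
  simp only [complexifiedRe, pairDilation_apply, eval_weightedDilation hQ,
    eval_weightedDilation (isWeightedHomogeneous_map_conj hQ)]
  ring

lemma fst_eq_zero_of_fderiv_complexifiedRe_eq_zero [Finite ι] [DecidableEq ι]
    (hQ : ∀ z : ι → ℂ, (∀ i, eval z (pderiv i Q) = 0) → z = 0) {p : (ι → ℂ) × (ι → ℂ)}
    (hp : ∀ i, fderiv ℂ (complexifiedRe Q) p (Pi.single i 1, 0) = 0) : p.1 = 0 :=
  hQ p.1 fun i => by simpa [fderiv_complexifiedRe_apply, fderiv_eval_single] using hp i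

lemma snd_eq_zero_of_fderiv_complexifiedRe_eq_zero [Finite ι] [DecidableEq ι]
    (hQ : ∀ z : ι → ℂ, (∀ i, eval z (pderiv i Q) = 0) → z = 0) {p : (ι → ℂ) × (ι → ℂ)}
    (hp : ∀ i, fderiv ℂ (complexifiedRe Q) p (0, Pi.single i 1) = 0) : p.2 = 0 :=
  eq_zero_of_eval_pderiv_map_conj_eq_zero hQ fun i => by
    rw [← fderiv_eval_single]
    simpa [fderiv_complexifiedRe_apply] using hp i

lemma hasLeadingPart_complexifiedRe [Fintype ι] {w : ι → ℕ} (hw : ∀ i, w i ≠ 0) {d : ℕ}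
    (hQ : IsWeightedHomogeneous w Q d) {f : (ι → ℂ) × (ι → ℂ) → ℂ} (hf : AnalyticAt ℂ f 0)
    {H : (ι → ℂ) → ℝ}
    (hfH : ∀ᶠ z in 𝓝 (0 : ι → ℂ), f (z, star z) = ((eval z Q).re + H z : ℝ))
    (hH : ∀ᶠ z in 𝓝 (0 : ι → ℂ),
      Tendsto (fun l : ℝ => H (weightedDilation w l z) / l ^ d) (𝓝[>] 0) (𝓝 0)) :
    HasLeadingPart (pairDilation w) f (complexifiedRe Q) := by
  refine hasLeadingPart_of_tendsto_sub (contDiff_pairDilation w) (pairDilation_zero hw) hf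
    (contDiff_complexifiedRe Q).contDiffAt.analyticAt (complexifiedRe_pairDilation hQ) ?_
  filter_upwards [hH] with z hz
  have hcont : Continuous fun l : ℝ => weightedDilation w (l : ℂ) z :=
    ((contDiff_weightedDilation w).continuous.comp Complex.continuous_ofReal).clm_apply
      continuous_const
  have hdil : Tendsto (fun l : ℝ => weightedDilation w (l : ℂ) z) (𝓝[>] 0) (𝓝 0) :=
    tendsto_nhdsWithin_of_tendsto_nhds
      (by simpa [weightedDilation_zero hw] using hcont.tendsto 0)
  have hlim := (Complex.continuous_ofReal.tendsto 0).comp hz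
  rw [Complex.ofReal_zero] at hlim
  refine hlim.congr' ?_
  filter_upwards [hdil.eventually hfH] with l hl
  simp [weightedDilation_ofReal_star, hl, complexifiedRe_star]

end ComplexifiedRe

section LeviFoliation

open MvPolynomial

variable {w : Fin 2 → ℕ} {d : ℕ} {Q : MvPolynomial (Fin 2) ℂ}
  {f : (Fin 2 → ℂ) × (Fin 2 → ℂ) → ℂ}

lemma weighted_curve_weightedDilation (v l : ℂ) (z : Fin 2 → ℂ) :
    weightedDilation w l z 1 ^ w 0 - v * weightedDilation w l z 0 ^ w 1 =
      l ^ (w 0 * w 1) * (z 1 ^ w 0 - v * z 0 ^ w 1) := by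
  simp only [weightedDilation_apply]
  ring

lemma hasLocalDimH_zeros_fderiv_inl (hw : ∀ i, w i ≠ 0) (hd : d ≠ 0)
    (hQ : IsWeightedHomogeneous w Q d) (hcrit : ∀ z, (∀ i, eval z (pderiv i Q) = 0) → z = 0)
    (hlead : HasLeadingPart (pairDilation w) f (complexifiedRe Q)) (hf : AnalyticAt ℂ f 0)
    (hf0 : f 0 = 0) (hdf0 : fderiv ℂ f 0 = 0) :
    HasLocalDimH {p | f p = 0 ∧ ∀ i, fderiv ℂ f p (Pi.single i 1, 0) = 0} 0 2 := by
  have hQ0 : map (starRingEnd ℂ) Q ≠ 0 := fun h => by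
    simpa using congrFun (eq_zero_of_eval_pderiv_map_conj_eq_zero hcrit (z := 1) (by simp [h])) 0
  obtain ⟨v, hv⟩ := exists_weighted_curve_inter_zeros_eq_zero hw
    (isWeightedHomogeneous_map_conj hQ) hQ0
  refine hlead.hasLocalDimH_zeros_valueAndDerivs (t := fun p => p.2 1 ^ w 0 - v * p.2 0 ^ w 1)
    (contDiff_pairDilation w).continuous (pairDilation_zero hw) hf hf0 hdf0
    ((contDiff_complexifiedRe Q).of_le le_top) (by simp) (fun i l => pairDilation_inl l i)
    (by fun_prop) (by simp [hw]) (fun l p => weighted_curve_weightedDilation v l p.2) ?_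
  intro p hp hdp htp
  have hp1 : p.1 = 0 := fst_eq_zero_of_fderiv_complexifiedRe_eq_zero hcrit hdp
  have hp2 : eval p.2 (map (starRingEnd ℂ) Q) = 0 := by
    rw [complexifiedRe, hp1, eval_zero_of_isWeightedHomogeneous hQ hw hd, zero_add] at hp
    exact (div_eq_zero_iff.1 hp).resolve_right two_ne_zero
  exact Prod.ext hp1 (hv p.2 hp2 htp)

lemma hasLocalDimH_zeros_fderiv_inr (hw : ∀ i, w i ≠ 0) (hd : d ≠ 0)
    (hQ : IsWeightedHomogeneous w Q d) (hcrit : ∀ z, (∀ i, eval z (pderiv i Q) = 0) → z = 0)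
    (hlead : HasLeadingPart (pairDilation w) f (complexifiedRe Q)) (hf : AnalyticAt ℂ f 0)
    (hf0 : f 0 = 0) (hdf0 : fderiv ℂ f 0 = 0) :
    HasLocalDimH {p | f p = 0 ∧ ∀ i, fderiv ℂ f p (0, Pi.single i 1) = 0} 0 2 := by
  have hQ0 : Q ≠ 0 := fun h => by simpa using congrFun (hcrit 1 (by simp [h])) 0
  obtain ⟨v, hv⟩ := exists_weighted_curve_inter_zeros_eq_zero hw hQ hQ0
  refine hlead.hasLocalDimH_zeros_valueAndDerivs (t := fun p => p.1 1 ^ w 0 - v * p.1 0 ^ w 1)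
    (contDiff_pairDilation w).continuous (pairDilation_zero hw) hf hf0 hdf0
    ((contDiff_complexifiedRe Q).of_le le_top) (by simp) (fun i l => pairDilation_inr l i)
    (by fun_prop) (by simp [hw]) (fun l p => weighted_curve_weightedDilation v l p.1) ?_
  intro p hp hdp htp
  have hp2 : p.2 = 0 := snd_eq_zero_of_fderiv_complexifiedRe_eq_zero hcrit hdp
  have hp1 : eval p.1 Q = 0 := by
    rw [complexifiedRe, hp2, eval_zero_of_isWeightedHomogeneous
      (isWeightedHomogeneous_map_conj hQ) hw hd, add_zero] at hp
    exact (div_eq_zero_iff.1 hp).resolve_right two_ne_zero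
  exact Prod.ext (hv p.1 hp1 htp) hp2

lemma eventually_eq_zero_of_fderiv_eq_zero_of_complexifiedRe {ι : Type*} [Fintype ι]
    {w : ι → ℕ} {Q : MvPolynomial ι ℂ} {f : (ι → ℂ) × (ι → ℂ) → ℂ} (hw : ∀ i, w i ≠ 0)
    (hcrit : ∀ z, (∀ i, eval z (pderiv i Q) = 0) → z = 0)
    (hlead : HasLeadingPart (pairDilation w) f (complexifiedRe Q)) (hf : AnalyticAt ℂ f 0) :
    ∀ᶠ p in 𝓝 0, fderiv ℂ f p = 0 → p = 0 := by
  classical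
  refine hlead.eventually_eq_zero_of_fderiv_eq_zero (contDiff_pairDilation w).continuous
    (pairDilation_zero hw) hf ((contDiff_complexifiedRe Q).of_le le_top)
    ((Pi.basisFun ℂ ι).prod (Pi.basisFun ℂ ι)) (m := Sum.elim w w) ?_ fun p hp => ?_
  · rintro (i | i) l
    · simpa using pairDilation_inl l i
    · simpa using pairDilation_inr l i
  · exact Prod.ext (fst_eq_zero_of_fderiv_complexifiedRe_eq_zero hcrit fun i => by simp [hp])
      (snd_eq_zero_of_fderiv_complexifiedRe_eq_zero hcrit fun i => by simp [hp])

lemma hasLocalDimH_singLC (hw : ∀ i, w i ≠ 0) (hd : d ≠ 0) (hQ : IsWeightedHomogeneous w Q d)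
    (hcrit : ∀ z, (∀ i, eval z (pderiv i Q) = 0) → z = 0)
    (hlead : HasLeadingPart (pairDilation w) f (complexifiedRe Q)) (hf : AnalyticAt ℂ f 0)
    (hf0 : f 0 = 0) (hdf0 : fderiv ℂ f 0 = 0) : HasLocalDimH (singLC f) 0 2 := by
  have hbranches := (hasLocalDimH_zeros_fderiv_inl hw hd hQ hcrit hlead hf hf0 hdf0).union
    (hasLocalDimH_zeros_fderiv_inr hw hd hQ hcrit hlead hf hf0 hdf0)
  refine (hbranches.diff_singleton 0).congr ?_
  filter_upwards [eventually_eq_zero_of_fderiv_eq_zero_of_complexifiedRe hw hcrit hlead hf]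
    with p hp
  have hsing : fderiv ℂ f p = 0 ↔ p = 0 := ⟨hp, fun h => h ▸ hdf0⟩
  simp only [mem_singLC_iff, Set.mem_sdiff, Set.mem_union, Set.mem_ofPred_eq,
    Set.mem_singleton_iff, ne_eq, hsing]
  tauto

end LeviFoliation

theorem stmt_5_general {w : Fin 2 → ℕ} (hw : ∀ i, w i ≠ 0) {d : ℕ} (hd : d ≠ 0)
    {Q : MvPolynomial (Fin 2) ℂ} (hQ : MvPolynomial.IsWeightedHomogeneous w Q d)
    (hQsing : ∀ᶠ z in 𝓝 (0 : Fin 2 → ℂ),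
      (∀ i, MvPolynomial.eval z (MvPolynomial.pderiv i Q) = 0) → z = 0)
    {F H : (Fin 2 → ℂ) → ℝ}
    (hFeq : ∀ᶠ z in 𝓝 (0 : Fin 2 → ℂ), F z = (MvPolynomial.eval z Q).re + H z)
    (hHord : ∀ᶠ z in 𝓝 (0 : Fin 2 → ℂ), Tendsto
      (fun l : ℝ => H (fun i => (l : ℂ) ^ w i * z i) / l ^ d) (𝓝[>] 0) (𝓝 0))
    (hF0 : F 0 = 0) (hsing : fderiv ℝ F 0 = 0)
    {FC : (Fin 2 → ℂ) × (Fin 2 → ℂ) → ℂ} (hFC : IsComplexification F FC) :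
    ∃ U ∈ 𝓝 (0 : (Fin 2 → ℂ) × (Fin 2 → ℂ)), dimH (singLC FC ∩ U) = 2 := by
  obtain ⟨hFCan, hFCstar⟩ := hFC
  have hlead : HasLeadingPart (pairDilation w) FC (complexifiedRe Q) := by
    refine hasLeadingPart_complexifiedRe hw hQ hFCan ?_ hHord
    filter_upwards [hFCstar, hFeq] with z hz hFz
    rw [hz, hFz]
  have hFC0 : FC 0 = 0 := by simpa [hF0, ← Prod.zero_eq_mk] using hFCstar.self_of_nhds
  have hdFC0 : fderiv ℂ FC 0 = 0 :=
    fderiv_eq_zero_of_apply_star_eq_ofReal hFCan.differentiableAt hFCstar hsing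
  exact (hasLocalDimH_singLC hw hd hQ (fun z => eq_zero_of_eval_pderiv_eq_zero hw hQ hQsing)
    hlead hFCan hFC0 hdFC0).exists_dimH_eq

/-- **Proposition (b).** `Sing(L_ℂ)` has codimension two in the three-dimensional complex
manifold `M*_ℂ`: near `0` it is a complex-analytic set of complex dimension one, i.e. of
Hausdorff dimension two. -/
theorem stmt_5
 (a b d : ℕ) (ha : 0 < a) (hb : 0 < b) (hd : 0 < d) (hab : Nat.gcd a b = 1)
    (Q : MvPolynomial (Fin 2) ℂ)
    -- `Q` is quasihomogeneous of type `(a,b)` and quasihomogeneous degree `d`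
    (hQqh : ∀ m ∈ Q.support, a * m 0 + b * m 1 = d)
    -- `Q` has an isolated singularity at `0 ∈ ℂ²`
    (hQcrit : ∀ i, MvPolynomial.eval (0 : Fin 2 → ℂ) (MvPolynomial.pderiv i Q) = 0)
    (hQsing : ∀ᶠ z in 𝓝 (0 : Fin 2 → ℂ),
      (∀ i, MvPolynomial.eval z (MvPolynomial.pderiv i Q) = 0) → z = 0)
    (F H : (Fin 2 → ℂ) → ℝ)
    (hF : AnalyticAt ℝ F 0) (hH : AnalyticAt ℝ H 0)
    -- `F(z) = Re(Q(z)) + H(z, z̄)`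
    (hFeq : ∀ᶠ z in 𝓝 (0 : Fin 2 → ℂ), F z = (MvPolynomial.eval z Q).re + H z)
    -- every monomial `z^μ z̄^ν` of the Taylor series of `H` has weighted degree
    -- `a(μ₁+ν₁) + b(μ₂+ν₂) > d`
    (hHord : ∃ r > (0:ℝ), ∀ z : Fin 2 → ℂ, ‖z‖ < r →
      Tendsto (fun lam : ℝ => H (fun i => (lam : ℂ) ^ (if i = 0 then a else b) * z i) / lam ^ d)
        (𝓝[>] 0) (𝓝 0))
    -- `M = {F = 0}` is a singular hypersurface at `0`
    (hF0 : F 0 = 0) (hsing : fderiv ℝ F 0 = 0)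
    (hirr : IrreducibleRGerm F)
    (hLF : LeviFlatGerm F)
    (FC : ((Fin 2 → ℂ) × (Fin 2 → ℂ)) → ℂ) (hFC : IsComplexification F FC)
    :
    ∃ U ∈ 𝓝 (0 : (Fin 2 → ℂ) × (Fin 2 → ℂ)), dimH (singLC FC ∩ U) = 2 := by
  obtain ⟨r, hr, hH0⟩ := hHord
  have hw (i : Fin 2) : (if i = 0 then a else b) ≠ 0 := by split_ifs <;> lia
  exact stmt_5_general (w := fun i => if i = 0 then a else b) hw hd.ne'
    (isWeightedHomogeneous_of_forall_mem_support hQqh) hQsing hFeq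
    (Metric.eventually_nhds_iff.2 ⟨r, hr, fun z hz => hH0 z (by simpa using hz)⟩) hF0 hsing hFC
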